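/- arXiv:1905.09452 — 3 statements merged into one kernel-verified Lean document; each statement's English description precedes it below -/
import Mathlib

section
/- Let Φ : ℕ → (1,∞) be a function with Φ(n) → ∞ as n → ∞, and suppose liminf_{n→∞} (log Φ(n))/n = ∞. Then the Hausdorff dimension of F(Φ) equals 1/(1+b), where log b = liminf_{n→∞} (log log Φ(n))/n. -/
/-!
Write `aₙ` for the partial quotients. The hypothesis `log Φ(n) / n → ∞` forces `b ≥ 1`, and the
two inequalities are proved separately.

**Upper bound.** For `d < b` one has `Φ(n) ≥ exp(dⁿ)` eventually. At a point of `F(Φ)` the sums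
`Sₙ = log a₁ + ⋯ + log aₙ` satisfy `Sₙ₊₁ ≥ log Φ(n)` infinitely often, hence (slightly lowering
`d`) infinitely often both `Sₙ₊₁ ≥ d Sₙ` and `Sₙ₊₁ ≥ dⁿ` (`frequently_growth`). In terms of
partial quotients, `aₙ₊₁ ≥ (a₁ ⋯ aₙ) ^ (d - 1)` and `aₙ₊₁ ≥ Kⁿ` for any fixed `K`. The part of
the cylinder of `(a₁, …, aₙ)` where this holds has diameter about `(a₁ ⋯ aₙ) ^ (-(1 + d))`, with
an additional small power of `K⁻ⁿ` to spare. For `s > 1/(1 + d)` the sum of the `s`-th powers of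
the diameters over all cylinders of order `n` is the `n`-th power of a convergent zeta sum times
that of a negative power of `K`, hence at most `2⁻ⁿ` for large `K`; so the `s`-dimensional
measure vanishes (`dimH_le_of_frequently`). For `b = 1` the same estimate is applied using only
`aₙ₊₁ ≥ Kⁿ`, which gives the bound `1/2`.

**Lower bound.** For a finite `c > b` let `Aᵢ` be, up to a cut-off at `10`, the largest sequence
below `log Φ(i)` that grows at most by the factor `c` per step. It meets `log Φ(i)` infinitely
often, since `log Φ(i)` drops below every multiple of `cⁱ` (`exists_slow_minorant`). Consequently
the irrational points with `aᵢ₊₁ ∈ [exp(Aᵢ)/2, exp(Aᵢ))` for all `i` belong to `F(Φ)`.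
Using mixed-radix digits of `t ∈ [0,1)` as choices of partial quotients maps `[0,1)` into this
Cantor set, and the inverse of that map is `r`-Hölder for every `r < 1/(1 + c)`, because
`Aₙ ≤ (c - 1)(A₀ + ⋯ + Aₙ₋₁) + A₀`; so the dimension is at least `r` (`le_dimH_digits`).
-/

open Filter Topology MeasureTheory
open scoped ENNReal NNReal

/-- The Gauss map `T(x) = 1/x - ⌊1/x⌋` (with `T 0 = 0`). -/
noncomputable def gaussMap (x : ℝ) : ℝ := if x = 0 then 0 else 1 / x - ⌊1 / x⌋

/-- The `n`-th partial quotient `a_n(x) = ⌊1 / T^[n-1] x⌋` of the continued fraction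
expansion of `x` (for `n ≥ 1`). -/
noncomputable def cfA (n : ℕ) (x : ℝ) : ℕ := ⌊1 / gaussMap^[n - 1] x⌋₊

/-- The continuant `q_n(a_1, …, a_n)`, defined by `q_{-1} = 0`, `q_0 = 1`,
`q_k = a_k q_{k-1} + q_{k-2}`. -/
def contQ (l : List ℕ) : ℕ := (l.foldl (fun p a => (p.2, a * p.2 + p.1)) (0, 1)).2

/-- The continuant numerator `p_n(a_1, …, a_n)`, defined by `p_{-1} = 1`, `p_0 = 0`,
`p_k = a_k p_{k-1} + p_{k-2}`. -/
def contP (l : List ℕ) : ℕ := (l.foldl (fun p a => (p.2, a * p.2 + p.1)) (1, 0)).2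

/-- `q_n(x) = q_n(a_1(x), …, a_n(x))`. -/
noncomputable def cfQ (x : ℝ) (n : ℕ) : ℕ := contQ (List.ofFn fun i : Fin n => cfA (i + 1) x)

/-- `p_n(x) = p_n(a_1(x), …, a_n(x))`. -/
noncomputable def cfP (x : ℝ) (n : ℕ) : ℕ := contP (List.ofFn fun i : Fin n => cfA (i + 1) x)

/-- The set `F(Φ)` of irrational `x ∈ [0,1)` with `a_{n+1}(x) a_n(x) ≥ Φ(n)` for infinitely
many `n` and `a_{n+1}(x) < Φ(n)` for all sufficiently large `n`. -/
def Fset (Φ : ℕ → ℝ) : Set ℝ :=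
  {x | x ∈ Set.Ico (0 : ℝ) 1 ∧ Irrational x ∧
    (∃ᶠ n in atTop, Φ n ≤ (cfA (n + 1) x : ℝ) * (cfA n x : ℝ)) ∧
    (∀ᶠ n in atTop, (cfA (n + 1) x : ℝ) < Φ n)}

/-! ### The Gauss map on irrational points -/

/-- The irrational points of `(0,1)`, a domain invariant under the Gauss map. -/
def gaussDomain : Set ℝ := {x | 0 < x ∧ x < 1 ∧ Irrational x}

lemma cfA_succ (n : ℕ) (x : ℝ) : cfA (n + 1) x = ⌊1 / gaussMap^[n] x⌋₊ := by
  simp [cfA]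

lemma gaussMap_mem {x : ℝ} (hx : x ∈ gaussDomain) : gaussMap x ∈ gaussDomain := by
  obtain ⟨h0, h1, hi⟩ := hx
  have e : gaussMap x = 1 / x - ((⌊1 / x⌋ : ℤ) : ℝ) := by simp [gaussMap, h0.ne']
  have hirr : Irrational (gaussMap x) := by
    rw [e, one_div]
    exact (irrational_inv_iff.mpr hi).sub_intCast _
  refine ⟨lt_of_le_of_ne ?_ (Ne.symm hirr.ne_zero), ?_, hirr⟩
  · rw [e]; linarith [Int.floor_le (1 / x)]
  · rw [e]; linarith [Int.lt_floor_add_one (1 / x)]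

lemma iterate_gaussMap_mem {x : ℝ} (hx : x ∈ gaussDomain) (n : ℕ) :
    gaussMap^[n] x ∈ gaussDomain := by
  induction n with
  | zero => exact hx
  | succ n ih => rw [Function.iterate_succ_apply']; exact gaussMap_mem ih

lemma one_div_eq_of_mem {x : ℝ} (hx : x ∈ gaussDomain) : 1 / x = ⌊1 / x⌋₊ + gaussMap x := by
  have h0 := hx.1
  have e : gaussMap x = 1 / x - ((⌊1 / x⌋ : ℤ) : ℝ) := by simp [gaussMap, h0.ne']
  have : ((⌊1 / x⌋₊ : ℕ) : ℝ) = ((⌊1 / x⌋ : ℤ) : ℝ) := natCast_floor_eq_intCast_floor (by positivity)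
  rw [e, this]; ring

lemma one_le_cfA_succ {x : ℝ} (hx : x ∈ gaussDomain) (n : ℕ) : 1 ≤ cfA (n + 1) x := by
  have h := iterate_gaussMap_mem hx n
  rw [cfA_succ]
  apply Nat.le_floor
  rw [Nat.cast_one, le_div_iff₀ h.1]
  linarith [h.2.1]

lemma iterate_le_inv_cfA {x : ℝ} (hx : x ∈ gaussDomain) (n : ℕ) :
    gaussMap^[n] x ≤ ((cfA (n + 1) x : ℝ))⁻¹ := by
  have h := iterate_gaussMap_mem hx n
  have h1 : (0 : ℝ) < cfA (n + 1) x := by exact_mod_cast one_le_cfA_succ hx n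
  rw [le_inv_comm₀ h.1 h1, cfA_succ, ← one_div]
  exact Nat.floor_le (by have := h.1; positivity)

/-- Two points of a common cylinder of order `n` are contracted by `∏ aᵢ⁻²`. -/
lemma abs_sub_le_of_cfA_eq {x y : ℝ} (hx : x ∈ gaussDomain) (hy : y ∈ gaussDomain) (n : ℕ)
    (h : ∀ i < n, cfA (i + 1) x = cfA (i + 1) y) :
    |x - y| ≤ (∏ i ∈ Finset.range n, (cfA (i + 1) x : ℝ))⁻¹ ^ 2 *
      |gaussMap^[n] x - gaussMap^[n] y| := by
  induction n with
  | zero => simp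
  | succ n ih =>
    refine (ih fun i hi => h i (hi.trans n.lt_succ_self)).trans ?_
    have hX := iterate_gaussMap_mem hx n
    have hY := iterate_gaussMap_mem hy n
    rw [Finset.prod_range_succ, mul_inv, mul_pow, mul_assoc]
    refine mul_le_mul_of_nonneg_left ?_ (by positivity)
    have ha : (1 : ℝ) ≤ cfA (n + 1) x := by exact_mod_cast one_le_cfA_succ hx n
    have eX := one_div_eq_of_mem hX
    have eY := one_div_eq_of_mem hY
    rw [← cfA_succ, ← Function.iterate_succ_apply' gaussMap] at eX eY
    rw [← h n n.lt_succ_self] at eY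
    set X := gaussMap^[n] x
    set Y := gaussMap^[n] y
    set a : ℝ := (cfA (n + 1) x : ℝ)
    have hX1 := iterate_gaussMap_mem hx (n + 1)
    have hY1 := iterate_gaussMap_mem hy (n + 1)
    set X1 := gaussMap^[n + 1] x
    set Y1 := gaussMap^[n + 1] y
    have hXp := hX.1
    have hYp := hY.1
    have e : X - Y = X * Y * (Y1 - X1) := by
      have : Y1 - X1 = 1 / Y - 1 / X := by rw [eX, eY]; ring
      rw [this]; field_simp
    have bX : X ≤ a⁻¹ := by
      rw [le_inv_comm₀ hXp (by linarith), ← one_div, eX]; linarith [hX1.1]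
    have bY : Y ≤ a⁻¹ := by
      rw [le_inv_comm₀ hYp (by linarith), ← one_div, eY]; linarith [hY1.1]
    rw [e, abs_mul, abs_sub_comm, abs_of_pos (mul_pos hXp hYp), sq]
    gcongr

/-! ### The covering estimate -/

lemma tsum_prod_eq_pow (f : ℕ → ℝ≥0∞) (n : ℕ) :
    ∑' l : Fin n → ℕ, ∏ i, f (l i) = (∑' k, f k) ^ n := by
  induction n with
  | zero => simp
  | succ n ih =>
    rw [← (Fin.consEquiv fun _ : Fin (n + 1) => ℕ).tsum_eq, ENNReal.tsum_prod', pow_succ', ← ih,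
      ← ENNReal.tsum_mul_right]
    congr 1
    ext a
    rw [← ENNReal.tsum_mul_left]
    congr 1
    ext l
    simp [Fin.prod_univ_succ]

/-- The part of the cylinder `(l₁, …, lₙ)` on which the next partial quotient is at least
both `(l₁ ⋯ lₙ)ᵉ` and `Kⁿ`. The digits are indexed from `0`, so `l i` is the value of `a_{i+1}`. -/
def largeCyl (e K : ℝ) (n : ℕ) (l : Fin n → ℕ) : Set ℝ :=
  {x | x ∈ gaussDomain ∧ (∀ i : Fin n, cfA (i + 1) x = l i) ∧
    (∏ i ∈ Finset.range n, (cfA (i + 1) x : ℝ)) ^ e ≤ cfA (n + 1) x ∧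
    K ^ n ≤ cfA (n + 1) x}

/-- A cylinder is contracted by `P⁻²`, where `P = l₁ ⋯ lₙ`, and the two lower bounds on
`a_{n+1}`, interpolated with weights `1 - ε` and `ε`, confine the `n`-th iterate to an interval
of length `P ^ (-e(1 - ε)) * K ^ (-nε)`. The second factor is what later makes the sum over
all cylinders of order `n` decay geometrically. -/
lemma ediam_largeCyl_le {e K ε : ℝ} (hK : 1 ≤ K) (hε0 : 0 ≤ ε) (hε1 : ε ≤ 1)
    (n : ℕ) (l : Fin n → ℕ) :
    Metric.ediam (largeCyl e K n l) ≤
      ENNReal.ofReal ((∏ i, (l i : ℝ)) ^ (-(2 + e * (1 - ε))) * (K ^ n) ^ (-ε)) := by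
  apply Metric.ediam_le
  rintro x ⟨hx, hxl, hx1, hx2⟩ y ⟨hy, hyl, hy1, hy2⟩
  rw [edist_dist, Real.dist_eq]
  apply ENNReal.ofReal_le_ofReal
  have hP : ∏ i ∈ Finset.range n, (cfA (i + 1) x : ℝ) = ∏ i, (l i : ℝ) := by
    rw [Finset.prod_range]; exact Finset.prod_congr rfl fun i _ => by rw [hxl i]
  have hP' : ∏ i ∈ Finset.range n, (cfA (i + 1) y : ℝ) = ∏ i, (l i : ℝ) := by
    rw [Finset.prod_range]; exact Finset.prod_congr rfl fun i _ => by rw [hyl i]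
  have key := abs_sub_le_of_cfA_eq hx hy n fun i hi => by
    rw [hxl ⟨i, hi⟩, hyl ⟨i, hi⟩]
  have hPpos : 0 < ∏ i, (l i : ℝ) := by
    rw [← hP]
    exact Finset.prod_pos fun i _ => by exact_mod_cast one_le_cfA_succ hx i
  rw [hP] at hx1 key
  rw [hP'] at hy1
  set P := ∏ i, (l i : ℝ)
  have hKn : 0 < K ^ n := by positivity
  -- the weighted geometric mean of the two lower bounds on the next partial quotient
  have aux : ∀ z ∈ gaussDomain, P ^ e ≤ cfA (n + 1) z → K ^ n ≤ cfA (n + 1) z →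
      gaussMap^[n] z ≤ P ^ (-(e * (1 - ε))) * (K ^ n) ^ (-ε) := by
    intro z hz h1 h2
    refine (iterate_le_inv_cfA hz n).trans ?_
    have ha : (0 : ℝ) < cfA (n + 1) z := by exact_mod_cast one_le_cfA_succ hz n
    have : P ^ (e * (1 - ε)) * (K ^ n) ^ ε ≤ cfA (n + 1) z := by
      calc P ^ (e * (1 - ε)) * (K ^ n) ^ ε
          = (P ^ e) ^ (1 - ε) * (K ^ n) ^ ε := by rw [Real.rpow_mul hPpos.le]
        _ ≤ (cfA (n + 1) z : ℝ) ^ (1 - ε) * (cfA (n + 1) z : ℝ) ^ ε := by gcongr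
        _ = cfA (n + 1) z := by rw [← Real.rpow_add ha]; simp
    rw [Real.rpow_neg hPpos.le, Real.rpow_neg hKn.le, ← mul_inv]
    gcongr
  refine key.trans ?_
  have hd : |gaussMap^[n] x - gaussMap^[n] y| ≤ P ^ (-(e * (1 - ε))) * (K ^ n) ^ (-ε) := by
    have X := aux x hx hx1 hx2
    have Y := aux y hy hy1 hy2
    have := (iterate_gaussMap_mem hx n).1
    have := (iterate_gaussMap_mem hy n).1
    rw [abs_le]; constructor <;> linarith
  calc P⁻¹ ^ 2 * _ ≤ P⁻¹ ^ 2 * (P ^ (-(e * (1 - ε))) * (K ^ n) ^ (-ε)) := by gcongr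
    _ = _ := by
      rw [← mul_assoc, neg_add, Real.rpow_add hPpos, Real.rpow_neg hPpos.le 2]
      norm_num

/-- The covering estimate behind the upper bound: the points at which, for every `K`, infinitely
often `a_{n+1} ≥ (a₁⋯aₙ)ᵉ` and `a_{n+1} ≥ Kⁿ` form a set of dimension at most `s`, for every
`s > 1/(2+e)`. -/
lemma dimH_le_of_frequently {S : Set ℝ} {e : ℝ} (he : 0 ≤ e) {s : ℝ≥0}
    (hs : 1 < (2 + e) * s) (hS : S ⊆ gaussDomain)
    (h : ∀ K : ℝ, 1 ≤ K → ∀ x ∈ S, ∃ᶠ n in atTop,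
      (∏ i ∈ Finset.range n, (cfA (i + 1) x : ℝ)) ^ e ≤ cfA (n + 1) x ∧
      K ^ n ≤ cfA (n + 1) x) :
    dimH S ≤ s := by
  have hs0 : (0 : ℝ) < s := by
    by_contra hcon
    have : (s : ℝ) = 0 := le_antisymm (not_lt.mp hcon) s.2
    rw [this] at hs; linarith
  obtain ⟨ε, hε0, hε1, hε⟩ : ∃ ε : ℝ, 0 < ε ∧ ε ≤ 1 ∧ 1 < (2 + e * (1 - ε)) * s := by
    set δ := (2 + e) * s - 1
    have hδ : 0 < δ := by simp only [δ]; linarith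
    have hes : 0 ≤ e * s := by positivity
    refine ⟨δ / (δ + e * s + 1), by positivity, ?_, ?_⟩
    · rw [div_le_one (by positivity)]; linarith
    · have h1 : e * s * (δ / (δ + e * s + 1)) < δ := by
        rw [mul_div_assoc', div_lt_iff₀ (by positivity)]
        nlinarith
      have h2 : (2 + e * (1 - δ / (δ + e * s + 1))) * s
        = δ + 1 - e * s * (δ / (δ + e * s + 1)) := by simp only [δ]; ring
      linarith
  set σ := (2 + e * (1 - ε)) * s with hσ
  set f : ℕ → ℝ≥0∞ := fun k => ENNReal.ofReal ((k : ℝ) ^ (-σ)) with hf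
  have hZ : ∑' k, f k ≠ ⊤ := by
    have : Summable fun k : ℕ => (k : ℝ) ^ (-σ) := Real.summable_nat_rpow.mpr (by linarith)
    exact this.tsum_ofReal_ne_top
  set Z := (∑' k, f k).toReal
  have hZ0 : 0 ≤ Z := ENNReal.toReal_nonneg
  have hZe : ∑' k, f k = ENNReal.ofReal Z := (ENNReal.ofReal_toReal hZ).symm
  -- `K` is chosen so that `K ^ (-ε * s) * Z ≤ 1 / 2`
  obtain ⟨K, hK1, hK⟩ : ∃ K : ℝ, 2 ≤ K ∧ K ^ (-(ε * s)) * Z ≤ 1 / 2 := by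
    have h1 := (tendsto_rpow_neg_atTop (y := ε * s) (by positivity)).mul_const Z
    rw [zero_mul] at h1
    obtain ⟨K, a, b⟩ := ((h1.eventually_le_const (show (0 : ℝ) < 1 / 2 by norm_num)).and
      (eventually_ge_atTop 2)).exists
    exact ⟨K, b, a⟩
  have hK0 : 0 < K := by linarith
  apply dimH_le_of_hausdorffMeasure_ne_top
  have hzero : μH[(s : ℝ)] S ≤ 0 := by
    have step := Measure.hausdorffMeasure_le_liminf_tsum (β := ℕ)
      (ι := fun N => Σ k : ℕ, (Fin (k + N) → ℕ)) (s : ℝ) S (l := atTop)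
      (fun N => ENNReal.ofReal ((K ^ (-ε)) ^ N)) ?_
      (fun N p => largeCyl e K (p.1 + N) p.2) ?_ ?_
    · refine step.trans ?_
      have hlim : Tendsto (fun N : ℕ => ∑' k : ℕ, ENNReal.ofReal ((1 / 2 : ℝ) ^ (k + N)))
          atTop (𝓝 0) := by
        apply ENNReal.tendsto_sum_nat_add (fun k => ENNReal.ofReal ((1 / 2 : ℝ) ^ k))
        exact (summable_geometric_of_lt_one (by norm_num) (by norm_num)).tsum_ofReal_ne_top
      rw [← hlim.liminf_eq]
      refine liminf_le_liminf (Eventually.of_forall fun N => ?_)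
      rw [ENNReal.tsum_sigma']
      refine ENNReal.tsum_le_tsum fun k => ?_
      set n := k + N
      calc ∑' l : Fin n → ℕ, Metric.ediam (largeCyl e K n l) ^ (s : ℝ)
          ≤ ∑' l : Fin n → ℕ, ENNReal.ofReal ((K ^ (-(ε * s))) ^ n) * ∏ i, f (l i) := by
            refine ENNReal.tsum_le_tsum fun l => ?_
            refine (ENNReal.rpow_le_rpow
              (ediam_largeCyl_le (by linarith) hε0.le hε1 n l) hs0.le).trans ?_
            rw [ENNReal.ofReal_rpow_of_nonneg (by positivity) hs0.le, hf,
              ← ENNReal.ofReal_prod_of_nonneg (fun i _ => by positivity),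
              ← ENNReal.ofReal_mul (by positivity)]
            apply le_of_eq
            congr 1
            rw [Real.mul_rpow (by positivity) (by positivity), ← Real.rpow_mul (by positivity),
              ← Real.rpow_mul (by positivity), mul_comm,
              Real.finsetProd_rpow _ _ (fun i _ => by positivity)]
            congr 1
            · rw [← Real.rpow_natCast, ← Real.rpow_natCast, ← Real.rpow_mul hK0.le,
                ← Real.rpow_mul hK0.le]
              ring_nf
            · rw [hσ]; ring_nf
        _ = ENNReal.ofReal ((K ^ (-(ε * s)) * Z) ^ n) := by
            rw [ENNReal.tsum_mul_left, tsum_prod_eq_pow, hZe, ← ENNReal.ofReal_pow hZ0,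
              ← ENNReal.ofReal_mul (by positivity), mul_pow]
        _ ≤ ENNReal.ofReal ((1 / 2 : ℝ) ^ n) := by
            apply ENNReal.ofReal_le_ofReal
            gcongr
    · rw [← ENNReal.ofReal_zero]
      apply ENNReal.tendsto_ofReal
      apply tendsto_pow_atTop_nhds_zero_of_lt_one (by positivity)
      exact Real.rpow_lt_one_of_one_lt_of_neg (by linarith) (by linarith)
    · refine Eventually.of_forall fun N p => ?_
      by_cases hne : (largeCyl e K (p.1 + N) p.2).Nonempty
      swap
      · rw [Set.not_nonempty_iff_eq_empty.mp hne]; simp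
      obtain ⟨x, hx, hxl, -⟩ := hne
      refine (ediam_largeCyl_le (by linarith) hε0.le hε1 _ _).trans ?_
      apply ENNReal.ofReal_le_ofReal
      have hP1 : 1 ≤ ∏ i, (p.2 i : ℝ) := by
        have : 1 ≤ ∏ i, p.2 i := Finset.one_le_prod' fun i _ => by
          rw [← hxl i]; exact one_le_cfA_succ hx i
        exact_mod_cast this
      have hA : (∏ i, (p.2 i : ℝ)) ^ (-(2 + e * (1 - ε))) ≤ 1 := by
        apply Real.rpow_le_one_of_one_le_of_nonpos hP1
        have : 0 ≤ e * (1 - ε) := mul_nonneg he (by linarith)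
        linarith
      have hB : (K ^ (p.1 + N)) ^ (-ε) = (K ^ (-ε)) ^ (p.1 + N) := by
        rw [← Real.rpow_natCast, ← Real.rpow_natCast, ← Real.rpow_mul hK0.le,
          ← Real.rpow_mul hK0.le, mul_comm]
      rw [hB]
      have hk1 : K ^ (-ε) ≤ 1 :=
        Real.rpow_le_one_of_one_le_of_nonpos (by linarith) (by linarith)
      calc _ ≤ 1 * (K ^ (-ε)) ^ (p.1 + N) := by gcongr
        _ ≤ (K ^ (-ε)) ^ N := by
          rw [one_mul]
          exact pow_le_pow_of_le_one (by positivity) hk1 (by omega)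
    · refine Eventually.of_forall fun N x hx => ?_
      obtain ⟨n, hn, h1, h2⟩ := (frequently_atTop.mp (h K (by linarith) x hx)) N
      obtain ⟨k, rfl⟩ := Nat.exists_eq_add_of_le' hn
      rw [Set.mem_iUnion]
      exact ⟨⟨k, fun i => cfA (i + 1) x⟩, hS hx, fun i => rfl, h1, h2⟩
  rw [nonpos_iff_eq_zero.mp hzero]
  exact ENNReal.zero_ne_top

/-! ### The upper bound -/

/-- A sequence that beats `d'ᵐ` infinitely often must, for `d < d'`, infinitely often both grow
by the factor `d` in one step and exceed `dⁿ`. -/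
lemma frequently_growth {S : ℕ → ℝ} {d d' : ℝ} (hd : 1 < d) (hdd : d < d')
    (h : ∃ᶠ m in atTop, d' ^ m ≤ S (m + 1)) :
    ∃ᶠ n in atTop, d * S n ≤ S (n + 1) ∧ d ^ n ≤ S (n + 1) := by
  by_contra hcon
  rw [not_frequently] at hcon
  obtain ⟨N, hN⟩ := eventually_atTop.mp hcon
  have hd0 : 0 < d := by linarith
  -- otherwise `max (S n) (d ^ n)` grows at most by the factor `d` from some point on
  have hstep : ∀ n ≥ N, max (S (n + 1)) (d ^ (n + 1)) ≤ d * max (S n) (d ^ n) := by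
    intro n hn
    have h1 : d * d ^ n ≤ d * max (S n) (d ^ n) := by gcongr; exact le_max_right _ _
    have h2 : d * S n ≤ d * max (S n) (d ^ n) := by gcongr; exact le_max_left _ _
    have h3 : d ^ n ≤ d * d ^ n := le_mul_of_one_le_left (by positivity) hd.le
    refine max_le ?_ (by rw [pow_succ']; exact h1)
    by_cases hc : d * S n ≤ S (n + 1)
    · have : ¬ d ^ n ≤ S (n + 1) := fun h' => hN n hn ⟨hc, h'⟩
      linarith
    · linarith
  have hbd : ∀ k, max (S (N + k)) (d ^ (N + k)) ≤ d ^ k * max (S N) (d ^ N) := by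
    intro k
    induction k with
    | zero => simp
    | succ k ih =>
      calc _ ≤ d * max (S (N + k)) (d ^ (N + k)) := hstep (N + k) (by omega)
        _ ≤ d * (d ^ k * max (S N) (d ^ N)) := by gcongr
        _ = _ := by ring
  set C := max (S N) (d ^ N)
  have hC : 0 < C := lt_max_of_lt_right (by positivity)
  have hlim : Tendsto (fun m : ℕ => (d' / d) ^ m) atTop atTop :=
    tendsto_pow_atTop_atTop_of_one_lt ((one_lt_div hd0).mpr hdd)
  obtain ⟨m, ⟨hm1, hm2⟩, hm3⟩ :=
    ((h.and_eventually (hlim.eventually_gt_atTop (d * C))).and_eventually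
      (eventually_ge_atTop N)).exists
  obtain ⟨k, rfl⟩ := Nat.exists_eq_add_of_le hm3
  have h1 : S (N + k + 1) ≤ d ^ (k + 1) * C := (le_max_left _ _).trans (hbd (k + 1))
  have h2 : d ^ k ≤ d ^ (N + k) := pow_le_pow_right₀ hd.le (by omega)
  rw [div_pow, lt_div_iff₀ (by positivity)] at hm2
  have : d * C * d ^ k ≤ d * C * d ^ (N + k) := by gcongr
  have e : d ^ (k + 1) * C = d * C * d ^ k := by ring
  linarith

lemma Fset_subset_gaussDomain (Φ : ℕ → ℝ) : Fset Φ ⊆ gaussDomain := by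
  rintro x ⟨hx, hi, -⟩
  exact ⟨lt_of_le_of_ne hx.1 (Ne.symm hi.ne_zero), hx.2, hi⟩

lemma eventually_pow_le_of_liminf_eq_top {Φ : ℕ → ℝ} (hΦ1 : ∀ n, 1 < Φ n)
    (hB : liminf (fun n : ℕ => ((Real.log (Φ n) / n : ℝ) : EReal)) atTop = ⊤)
    {K : ℝ} (hK : 0 < K) : ∀ᶠ n in atTop, K ^ n ≤ Φ n := by
  have h := eventually_lt_of_lt_liminf (f := atTop)
    (u := fun n : ℕ => ((Real.log (Φ n) / n : ℝ) : EReal)) (b := ((Real.log K : ℝ) : EReal))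
    (by rw [hB]; exact EReal.coe_lt_top _)
  filter_upwards [h, eventually_gt_atTop 0] with n hn hn0
  rw [EReal.coe_lt_coe_iff, lt_div_iff₀ (by exact_mod_cast hn0)] at hn
  have h0 : 0 < Φ n := by linarith [hΦ1 n]
  rw [← Real.log_le_log_iff (by positivity) h0, Real.log_pow]
  linarith

lemma eventually_exp_pow_le {Φ : ℕ → ℝ} (hΦ1 : ∀ n, 1 < Φ n) {b : ℝ≥0∞}
    (hb : ENNReal.log b =
      liminf (fun n : ℕ => ((Real.log (Real.log (Φ n)) / n : ℝ) : EReal)) atTop)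
    {d : ℝ} (hd : 0 < d) (hdb : ENNReal.ofReal d < b) :
    ∀ᶠ n in atTop, d ^ n ≤ Real.log (Φ n) := by
  have h := eventually_lt_of_lt_liminf (f := atTop)
    (u := fun n : ℕ => ((Real.log (Real.log (Φ n)) / n : ℝ) : EReal))
    (b := ((Real.log d : ℝ) : EReal))
    (by rw [← hb, ← ENNReal.log_ofReal_of_pos hd]; exact ENNReal.log_lt_log hdb)
  filter_upwards [h, eventually_gt_atTop 0] with n hn hn0
  rw [EReal.coe_lt_coe_iff, lt_div_iff₀ (by exact_mod_cast hn0)] at hn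
  have h0 : 0 < Real.log (Φ n) := Real.log_pos (hΦ1 n)
  rw [← Real.log_le_log_iff (by positivity) h0, Real.log_pow]
  linarith

/-- The bound `dim F(Φ) ≤ 1/2`: as `aₙ aₙ₊₁ ≥ Φ(n) ≥ K²ⁿ` infinitely often, one of the two factors
is at least `Kⁿ`. -/
lemma dimH_Fset_le_of_half {Φ : ℕ → ℝ} (hΦ1 : ∀ n, 1 < Φ n)
    (hB : liminf (fun n : ℕ => ((Real.log (Φ n) / n : ℝ) : EReal)) atTop = ⊤)
    {s : ℝ≥0} (hs : (1 : ℝ) < 2 * s) : dimH (Fset Φ) ≤ s := by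
  refine dimH_le_of_frequently (e := 0) le_rfl (by linarith) (Fset_subset_gaussDomain Φ) ?_
  intro K hK x hx
  have hxG := Fset_subset_gaussDomain Φ hx
  simp only [Real.rpow_zero]
  rw [frequently_atTop]
  intro N
  obtain ⟨m, ⟨hm1, hm2⟩, hm3⟩ := ((hx.2.2.1.and_eventually
    (eventually_pow_le_of_liminf_eq_top hΦ1 hB (K := K ^ 2) (by positivity))).and_eventually
      (eventually_ge_atTop (N + 1))).exists
  obtain ⟨k, rfl⟩ : ∃ k, m = k + 1 := ⟨m - 1, by omega⟩
  have h1 : ∀ n, (1 : ℝ) ≤ cfA (n + 1) x := fun n => by exact_mod_cast one_le_cfA_succ hxG n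
  by_cases hc : K ^ (k + 1) ≤ (cfA (k + 1 + 1) x : ℝ)
  · exact ⟨k + 1, by omega, h1 _, hc⟩
  · refine ⟨k, by omega, h1 _, ?_⟩
    have hpow : K ^ k ≤ K ^ (k + 1) := pow_le_pow_right₀ hK (by omega)
    by_contra hc'
    have hsq : (K ^ 2) ^ (k + 1) = K ^ (k + 1) * K ^ (k + 1) := by ring
    have : (cfA (k + 1 + 1) x : ℝ) * cfA (k + 1) x < K ^ (k + 1) * K ^ (k + 1) := by
      apply mul_lt_mul'' <;> linarith [h1 k, h1 (k + 1)]
    linarith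

/-- The bound `dim F(Φ) ≤ 1/(1+d)` when `Φ(n) ≥ exp(d'ⁿ)` eventually, `1 < d < d'`. It comes from
`frequently_growth` for the sums `Sₙ = log a₁ + ⋯ + log aₙ`: `Sₙ₊₁ ≥ d Sₙ` reads
`aₙ₊₁ ≥ (a₁ ⋯ aₙ) ^ (d - 1)`. -/
lemma dimH_Fset_le_of_lt {Φ : ℕ → ℝ} (hΦ1 : ∀ n, 1 < Φ n) {d d' : ℝ} (hd : 1 < d) (hdd : d < d')
    (hΦ : ∀ᶠ n in atTop, d' ^ n ≤ Real.log (Φ n))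
    {s : ℝ≥0} (hs : 1 < (1 + d) * s) : dimH (Fset Φ) ≤ s := by
  refine dimH_le_of_frequently (e := d - 1) (by linarith) (by linarith)
    (Fset_subset_gaussDomain Φ) ?_
  intro K hK x hx
  have hxG := Fset_subset_gaussDomain Φ hx
  have h1 : ∀ n, (1 : ℝ) ≤ cfA (n + 1) x := fun n => by exact_mod_cast one_le_cfA_succ hxG n
  have hl : ∀ n, 0 ≤ Real.log (cfA (n + 1) x) := fun n => Real.log_nonneg (h1 n)
  set S : ℕ → ℝ := fun n => ∑ i ∈ Finset.range n, Real.log (cfA (i + 1) x) with hS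
  have hSs : ∀ n, S (n + 1) = S n + Real.log (cfA (n + 1) x) := fun n => Finset.sum_range_succ _ _
  have hS0 : ∀ n, 0 ≤ S n := fun n => Finset.sum_nonneg fun i _ => hl i
  have hfreq : ∃ᶠ m in atTop, d' ^ m ≤ S (m + 1) := by
    refine ((hx.2.2.1.and_eventually hΦ).and_eventually (eventually_ge_atTop 1)).mono ?_
    rintro m ⟨⟨hm1, hm2⟩, hm3⟩
    obtain ⟨k, rfl⟩ : ∃ k, m = k + 1 := ⟨m - 1, by omega⟩
    have h3 : Real.log (Φ (k + 1)) ≤ Real.log (cfA (k + 1 + 1) x * cfA (k + 1) x) :=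
      Real.log_le_log (by linarith [hΦ1 (k + 1)]) hm1
    rw [Real.log_mul (by linarith [h1 (k + 1)]) (by linarith [h1 k])] at h3
    rw [hSs, hSs]
    linarith [hS0 k]
  have hev : ∀ᶠ n : ℕ in atTop, n * Real.log K ≤ (1 - 1 / d) * d ^ n := by
    have h2 := (tendsto_pow_const_div_const_pow_of_one_lt 1 hd).mul_const (Real.log K)
    rw [zero_mul] at h2
    have hpos : (0 : ℝ) < 1 - 1 / d := by
      rw [sub_pos, div_lt_one (by linarith)]; exact hd
    filter_upwards [h2.eventually_le_const hpos] with n hn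
    rw [pow_one, div_mul_eq_mul_div, div_le_iff₀ (by positivity)] at hn
    exact hn
  refine ((frequently_growth hd hdd hfreq).and_eventually hev).mono ?_
  rintro n ⟨⟨hn1, hn2⟩, hn3⟩
  have ha : (0 : ℝ) < cfA (n + 1) x := by linarith [h1 n]
  constructor
  · have hP : 0 < ∏ i ∈ Finset.range n, (cfA (i + 1) x : ℝ) :=
      Finset.prod_pos fun i _ => lt_of_lt_of_le one_pos (h1 i)
    have hlog : Real.log (∏ i ∈ Finset.range n, (cfA (i + 1) x : ℝ)) = S n :=
      Real.log_prod fun i _ => (lt_of_lt_of_le one_pos (h1 i)).ne'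
    rw [← Real.log_le_log_iff (Real.rpow_pos_of_pos hP _) ha, Real.log_rpow hP, hlog]
    linarith [hSs n]
  · rw [← Real.log_le_log_iff (by positivity) ha, Real.log_pow]
    refine hn3.trans ?_
    have hd0 : 0 < d := by linarith
    have e1 : S n ≤ 1 / d * S (n + 1) := by
      rw [div_mul_eq_mul_div, one_mul, le_div_iff₀ hd0]; linarith
    have hpos : (0 : ℝ) ≤ 1 - 1 / d := by
      rw [sub_nonneg, div_le_one (by linarith)]; exact hd.le
    have e2 : (1 - 1 / d) * d ^ n ≤ (1 - 1 / d) * S (n + 1) := by gcongr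
    have := hSs n
    linarith

lemma dimH_Fset_le {Φ : ℕ → ℝ} (hΦ1 : ∀ n, 1 < Φ n)
    (hB : liminf (fun n : ℕ => ((Real.log (Φ n) / n : ℝ) : EReal)) atTop = ⊤)
    {b : ℝ≥0∞}
    (hb : ENNReal.log b =
      liminf (fun n : ℕ => ((Real.log (Real.log (Φ n)) / n : ℝ) : EReal)) atTop) :
    dimH (Fset Φ) ≤ (1 + b)⁻¹ := by
  refine le_of_forall_gt_imp_ge_of_dense fun s hs => ?_
  induction s with
  | top => exact le_top
  | coe s =>
    by_cases h2 : (1 : ℝ) < 2 * s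
    · exact dimH_Fset_le_of_half hΦ1 hB h2
    have hs0 : (0 : ℝ) < s := by
      have : (0 : ℝ≥0∞) < s := lt_of_le_of_lt zero_le hs
      exact_mod_cast this
    have h1 : (1 : ℝ) ≤ 1 / s - 1 := by
      rw [le_sub_iff_add_le, le_div_iff₀ hs0]; linarith
    have h3 : ENNReal.ofReal (1 / s - 1) < b := by
      by_contra hcon
      rw [not_lt] at hcon
      have h4 : 1 + b ≤ ENNReal.ofReal (1 / s) := by
        calc 1 + b ≤ ENNReal.ofReal 1 + ENNReal.ofReal (1 / s - 1) := by
              rw [ENNReal.ofReal_one]; gcongr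
          _ = ENNReal.ofReal (1 / s) := by
              rw [← ENNReal.ofReal_add (by norm_num) (by linarith)]; ring_nf
      have h5 := ENNReal.inv_le_inv.mpr h4
      rw [one_div, ENNReal.ofReal_inv_of_pos hs0, inv_inv, ENNReal.ofReal_coe_nnreal] at h5
      exact absurd hs (not_lt.mpr h5)
    obtain ⟨d', hd1, hd2⟩ := ENNReal.lt_iff_exists_nnreal_btwn.mp h3
    have hd1' : 1 / (s : ℝ) - 1 < d' := by
      rw [← ENNReal.ofReal_coe_nnreal] at hd1
      exact (ENNReal.ofReal_lt_ofReal_iff_of_nonneg (by linarith)).mp hd1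
    obtain ⟨d, hda, hdb⟩ := exists_between hd1'
    refine dimH_Fset_le_of_lt hΦ1 (d := d) (d' := d') (by linarith) hdb
      (eventually_exp_pow_le hΦ1 hb (by linarith) (by rwa [ENNReal.ofReal_coe_nnreal])) ?_
    have : 1 / (s : ℝ) < 1 + d := by linarith
    rwa [div_lt_iff₀ hs0] at this

/-! ### Prescribing partial quotients -/

/-- Any digit sequence with all entries at least `2` is realised: `x i` is the value of the
continued fraction with digits `a i, a (i+1), …`. -/
lemma exists_cf_tails (a : ℕ → ℕ) (ha : ∀ i, 2 ≤ a i) :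
    ∃ x : ℕ → ℝ, ∀ i, 0 < x i ∧ x i ≤ 1 / 2 ∧ x i = 1 / (a i + x (i + 1)) := by
  have ha' : ∀ i, (2 : ℝ) ≤ a i := fun i => by exact_mod_cast ha i
  -- `u n i` is the truncation after `n` digits
  let u : ℕ → ℕ → ℝ := fun n => Nat.rec (fun _ => 0) (fun _ v i => 1 / (a i + v (i + 1))) n
  have u0 : ∀ i, u 0 i = 0 := fun i => rfl
  have us : ∀ n i, u (n + 1) i = 1 / (a i + u n (i + 1)) := fun n i => rfl
  have hu0 : ∀ n i, 0 ≤ u n i := by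
    intro n
    induction n with
    | zero => intro i; rw [u0]
    | succ n ih => intro i; rw [us]; have := ih (i + 1); positivity
  have hdist : ∀ n i, dist (u n i) (u (n + 1) i) ≤ 1 * (1 / 2 : ℝ) ^ n := by
    intro n
    induction n with
    | zero =>
      intro i
      rw [u0, us, u0, Real.dist_eq, zero_sub, abs_neg, abs_of_nonneg (by positivity)]
      rw [add_zero, div_le_iff₀ (by linarith [ha' i])]
      linarith [ha' i]
    | succ n ih =>
      intro i
      have h1 := ih (i + 1)
      rw [Real.dist_eq] at h1 ⊢
      rw [us n i, us (n + 1) i]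
      have p := hu0 n (i + 1)
      have q := hu0 (n + 1) (i + 1)
      have A := ha' i
      have pa : 0 < a i + u n (i + 1) := by linarith
      have qa : 0 < a i + u (n + 1) (i + 1) := by linarith
      have e : 1 / (a i + u n (i + 1)) - 1 / (a i + u (n + 1) (i + 1))
          = (u (n + 1) (i + 1) - u n (i + 1)) /
            ((a i + u n (i + 1)) * (a i + u (n + 1) (i + 1))) := by
        field_simp; ring
      rw [e, abs_div, abs_of_pos (mul_pos pa qa), div_le_iff₀ (mul_pos pa qa), abs_sub_comm]
      have h4 : 2 ≤ (a i + u n (i + 1)) * (a i + u (n + 1) (i + 1)) := by nlinarith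
      have hp : (0 : ℝ) < (1 / 2) ^ n := by positivity
      calc _ ≤ 1 * (1 / 2 : ℝ) ^ n := h1
        _ = 1 * (1 / 2 : ℝ) ^ (n + 1) * 2 := by ring
        _ ≤ _ := by gcongr
  have hlim : ∀ i, ∃ y, Tendsto (fun n => u n i) atTop (𝓝 y) := fun i =>
    cauchySeq_tendsto_of_complete
      (cauchySeq_of_le_geometric (1 / 2) 1 (by norm_num) fun n => hdist n i)
  choose x hx using hlim
  have x0 : ∀ i, 0 ≤ x i := fun i => ge_of_tendsto' (hx i) fun n => hu0 n i
  have xe : ∀ i, x i = 1 / (a i + x (i + 1)) := by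
    intro i
    have h1 : Tendsto (fun n => u (n + 1) i) atTop (𝓝 (x i)) :=
      (hx i).comp (tendsto_add_atTop_nat 1)
    have h2 : Tendsto (fun n => u (n + 1) i) atTop (𝓝 (1 / (a i + x (i + 1)))) := by
      simp only [us]
      exact tendsto_const_nhds.div (tendsto_const_nhds.add (hx (i + 1)))
        (by linarith [ha' i, x0 (i + 1)])
    exact tendsto_nhds_unique h1 h2
  refine ⟨x, fun i => ⟨?_, ?_, xe i⟩⟩
  · rw [xe i]; have := x0 (i + 1); have := ha' i; positivity
  · rw [xe i]
    exact one_div_le_one_div_of_le (by norm_num) (by linarith [ha' i, x0 (i + 1)])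

lemma cfA_of_tails {a : ℕ → ℕ} {x : ℕ → ℝ}
    (h : ∀ i, 0 < x i ∧ x i ≤ 1 / 2 ∧ x i = 1 / (a i + x (i + 1))) (i : ℕ) :
    cfA (i + 1) (x 0) = a i := by
  have hinv : ∀ i, 1 / x i = a i + x (i + 1) := fun i => by rw [(h i).2.2]; simp
  have hit : ∀ i, gaussMap^[i] (x 0) = x i := by
    intro i
    induction i with
    | zero => rfl
    | succ i ih =>
      rw [Function.iterate_succ_apply', ih, gaussMap, if_neg (h i).1.ne', hinv]
      have : ⌊(a i : ℝ) + x (i + 1)⌋ = (a i : ℤ) := by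
        rw [Int.floor_eq_iff]
        push_cast
        constructor <;> linarith [(h (i + 1)).1, (h (i + 1)).2.1]
      rw [this]; push_cast; ring
  rw [cfA_succ, hit, hinv, Nat.floor_eq_iff (by have := (h (i + 1)).1; positivity)]
  constructor <;> linarith [(h (i + 1)).1, (h (i + 1)).2.1]

/-! ### The dimension of a Cantor set of continued fractions -/

/-- A map out of `[0,1)` with a Hölder inverse of exponent `r` has image of dimension at
least `r`. -/
lemma le_dimH_image_of_holder_inv {g : ℝ → ℝ} {r : ℝ≥0} (hr : 0 < r) {C : ℝ} (hC : 0 ≤ C)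
    (h : ∀ s ∈ Set.Ico (0 : ℝ) 1, ∀ t ∈ Set.Ico (0 : ℝ) 1, |s - t| ≤ C * |g s - g t| ^ (r : ℝ)) :
    (r : ℝ≥0∞) ≤ dimH (g '' Set.Ico 0 1) := by
  have hr' : (r : ℝ) ≠ 0 := by exact_mod_cast hr.ne'
  have hinj : Set.InjOn g (Set.Ico 0 1) := by
    intro s hs t ht hst
    have := h s hs t ht
    rw [hst, sub_self, abs_zero, Real.zero_rpow hr', mul_zero] at this
    linarith [abs_nonpos_iff.mp this]
  set f := Function.invFunOn g (Set.Ico 0 1)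
  have hleft : ∀ s ∈ Set.Ico (0 : ℝ) 1, f (g s) = s := fun s hs => hinj.leftInvOn_invFunOn hs
  have hH : HolderOnWith C.toNNReal r f (g '' Set.Ico 0 1) := by
    rintro _ ⟨s, hs, rfl⟩ _ ⟨t, ht, rfl⟩
    rw [hleft s hs, hleft t ht, edist_dist, edist_dist, Real.dist_eq, Real.dist_eq,
      ENNReal.ofReal_rpow_of_nonneg (abs_nonneg _) r.coe_nonneg]
    change _ ≤ ENNReal.ofReal C * _
    rw [← ENNReal.ofReal_mul hC]
    exact ENNReal.ofReal_le_ofReal (h s hs t ht)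
  have himg : f '' (g '' Set.Ico 0 1) = Set.Ico (0 : ℝ) 1 := by
    rw [Set.image_image]
    ext y
    constructor
    · rintro ⟨s, hs, rfl⟩; simpa only [hleft s hs] using hs
    · intro hy; exact ⟨y, hy, hleft y hy⟩
  have key := hH.dimH_image_le hr
  rw [himg, Real.dimH_of_nonempty_interior (by rw [interior_Ico]; exact ⟨1 / 2, by norm_num, by norm_num⟩)] at key
  rw [Module.finrank_self, Nat.cast_one, ENNReal.le_div_iff_mul_le (Or.inl (by exact_mod_cast hr.ne'))
    (Or.inl ENNReal.coe_ne_top), one_mul] at key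
  exact key

/-- Mixed-radix expansion: `τ i t` is the `i`-th remainder of `t ∈ [0,1)` in the bases `m`,
and `δ i t` the `i`-th digit. -/
lemma exists_mixed_radix (m : ℕ → ℕ) (hm : ∀ i, 1 ≤ m i) :
    ∃ (τ : ℕ → ℝ → ℝ) (δ : ℕ → ℝ → ℕ), ∀ t ∈ Set.Ico (0 : ℝ) 1, τ 0 t = t ∧
      ∀ i, 0 ≤ τ i t ∧ τ i t < 1 ∧ δ i t < m i ∧ m i * τ i t = δ i t + τ (i + 1) t := by
  let τ : ℕ → ℝ → ℝ := fun n => Nat.rec (fun t => t) (fun i v t => Int.fract (m i * v t)) n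
  have τs : ∀ i t, τ (i + 1) t = Int.fract (m i * τ i t) := fun i t => rfl
  refine ⟨τ, fun i t => ⌊m i * τ i t⌋₊, fun t ht => ⟨rfl, ?_⟩⟩
  have hτ : ∀ i, 0 ≤ τ i t ∧ τ i t < 1 := by
    intro i
    cases i with
    | zero => exact ht
    | succ i => rw [τs]; exact ⟨Int.fract_nonneg _, Int.fract_lt_one _⟩
  intro i
  obtain ⟨h0, h1⟩ := hτ i
  have hmi : (0 : ℝ) < m i := by exact_mod_cast hm i
  have hp : 0 ≤ m i * τ i t := by positivity
  refine ⟨h0, h1, ?_, ?_⟩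
  · rw [Nat.floor_lt hp]; nlinarith
  · rw [τs, natCast_floor_eq_intCast_floor hp, Int.floor_add_fract]

lemma four_le_exp_two : (4 : ℝ) ≤ Real.exp 2 := by
  have h : Real.exp 2 = Real.exp 1 * Real.exp 1 := by rw [← Real.exp_add]; norm_num
  have := Real.add_one_le_exp (1 : ℝ)
  rw [h]; nlinarith

/-- Points whose first `n` digits agree and whose tails are bounded below by `1/(2 E i)` are
separated by at least `∏ (2 E i)⁻²` times the distance of their `n`-th tails. -/
lemma prod_mul_le_abs_sub {a a' : ℕ → ℕ} {x y : ℕ → ℝ} {E : ℕ → ℝ}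
    (hx : ∀ i, 0 < x i ∧ x i ≤ 1 / 2 ∧ x i = 1 / (a i + x (i + 1)))
    (hy : ∀ i, 0 < y i ∧ y i ≤ 1 / 2 ∧ y i = 1 / (a' i + y (i + 1)))
    (hE : ∀ i, 0 < E i)
    (hxE : ∀ i, 1 / (2 * E i) ≤ x i) (hyE : ∀ i, 1 / (2 * E i) ≤ y i) (n : ℕ)
    (heq : ∀ i < n, a i = a' i) :
    |x n - y n| ≤ (∏ i ∈ Finset.range n, (4 * E i ^ 2)) * |x 0 - y 0| := by
  induction n with
  | zero => simp
  | succ n ih =>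
    have ih := ih fun i hi => heq i (hi.trans n.lt_succ_self)
    rw [Finset.prod_range_succ]
    have hxi : 1 / x n = a n + x (n + 1) := by rw [(hx n).2.2]; simp
    have hyi : 1 / y n = a' n + y (n + 1) := by rw [(hy n).2.2]; simp
    have px := (hx n).1
    have py := (hy n).1
    have e : x (n + 1) - y (n + 1) = (y n - x n) / (x n * y n) := by
      have : x (n + 1) - y (n + 1) = 1 / x n - 1 / y n := by
        rw [hxi, hyi, heq n n.lt_succ_self]; ring
      rw [this]; field_simp
    have hb : 1 / (4 * E n ^ 2) ≤ x n * y n := by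
      have := hE n
      calc 1 / (4 * E n ^ 2) = 1 / (2 * E n) * (1 / (2 * E n)) := by field_simp; norm_num
        _ ≤ x n * y n := by gcongr <;> [exact hxE n; exact hyE n]
    rw [e, abs_div, abs_of_pos (mul_pos px py), div_le_iff₀ (mul_pos px py), abs_sub_comm]
    refine ih.trans ?_
    have hE' := hE n
    set W := ∏ i ∈ Finset.range n, (4 * E i ^ 2)
    have hW : 0 ≤ W := Finset.prod_nonneg fun i _ => by positivity
    calc W * |x 0 - y 0| = W * (4 * E n ^ 2) * |x 0 - y 0| * (1 / (4 * E n ^ 2)) := by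
          field_simp
      _ ≤ _ := by gcongr

/-- The Cantor-type set of points with `aᵢ₊₁ ∈ [e^{Aᵢ}/2, e^{Aᵢ})` for every `i` has dimension
at least `r` as soon as `r (Aₙ + 2 Sₙ + 2n) ≤ Sₙ - 2n + C` with `Sₙ = A₀ + ⋯ + Aₙ₋₁`. The set is
parametrised by the mixed-radix expansions of the points of `[0,1)`. -/
lemma le_dimH_digits {A : ℕ → ℝ} (hA : ∀ i, 10 ≤ A i) {r : ℝ≥0} (hr0 : 0 < r) (hr1 : (r : ℝ) ≤ 1)
    {C : ℝ}
    (hC : ∀ n : ℕ, r * (A n + 2 * (∑ i ∈ Finset.range n, A i) + 2 * n) ≤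
      (∑ i ∈ Finset.range n, A i) - 2 * n + C) :
    (r : ℝ≥0∞) ≤ dimH {x : ℝ | x ∈ Set.Ico (0 : ℝ) 1 ∧
      ∀ i, Real.exp (A i) / 2 ≤ cfA (i + 1) x ∧ (cfA (i + 1) x : ℝ) < Real.exp (A i)} := by
  set E : ℕ → ℝ := fun i => Real.exp (A i) with hEdef
  have hE : ∀ i, 11 ≤ E i := fun i => by
    have := Real.add_one_le_exp (A i); have := hA i; simp only [hEdef]; linarith
  have hE0 : ∀ i, 0 < E i := fun i => by linarith [hE i]
  -- the digits used are `N i, …, N i + m i - 1`, all in `[E i / 2, E i)`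
  set N : ℕ → ℕ := fun i => ⌈E i / 2⌉₊
  set m : ℕ → ℕ := fun i => ⌈E i / 4⌉₊
  have hN1 : ∀ i, E i / 2 ≤ N i := fun i => Nat.le_ceil _
  have hN2 : ∀ i, (N i : ℝ) < E i / 2 + 1 := fun i => Nat.ceil_lt_add_one (by linarith [hE i])
  have hm1 : ∀ i, E i / 4 ≤ m i := fun i => Nat.le_ceil _
  have hm2 : ∀ i, (m i : ℝ) < E i / 4 + 1 := fun i => Nat.ceil_lt_add_one (by linarith [hE i])
  have hm3 : ∀ i, (2 : ℝ) ≤ m i := fun i => by linarith [hm1 i, hE i]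
  obtain ⟨τ, δ, hτδ⟩ := exists_mixed_radix m fun i => by
    have : (1 : ℝ) ≤ m i := by linarith [hm3 i]
    exact_mod_cast this
  have hex : ∀ t : ℝ, ∃ x : ℕ → ℝ, ∀ i,
      0 < x i ∧ x i ≤ 1 / 2 ∧ x i = 1 / (((N i + δ i t : ℕ) : ℝ) + x (i + 1)) := by
    intro t
    apply exists_cf_tails (fun i => N i + δ i t)
    intro i
    have : (2 : ℝ) ≤ N i := by linarith [hN1 i, hE i]
    have : 2 ≤ N i := by exact_mod_cast this
    omega
  choose x hx using hex
  have hdig : ∀ t ∈ Set.Ico (0 : ℝ) 1, ∀ i, ((N i + δ i t : ℕ) : ℝ) < E i := by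
    intro t ht i
    have h1 : ((δ i t + 1 : ℕ) : ℝ) ≤ m i := by exact_mod_cast ((hτδ t ht).2 i).2.2.1
    push_cast at h1 ⊢
    linarith [hN2 i, hm2 i, hE i]
  have hxE : ∀ t ∈ Set.Ico (0 : ℝ) 1, ∀ i, 1 / (2 * E i) ≤ x t i := by
    intro t ht i
    rw [(hx t i).2.2]
    have h1 := (hx t (i + 1)).1
    have h2 := (hx t (i + 1)).2.1
    apply one_div_le_one_div_of_le
    · have : (0 : ℝ) ≤ ((N i + δ i t : ℕ) : ℝ) := Nat.cast_nonneg _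
      linarith
    · linarith [hdig t ht i, hE i]
  -- the Hölder estimate for the inverse of `t ↦ x t 0`
  have hhol : ∀ s ∈ Set.Ico (0 : ℝ) 1, ∀ t ∈ Set.Ico (0 : ℝ) 1,
      |s - t| ≤ (64 * Real.exp C) * |x s 0 - x t 0| ^ (r : ℝ) := by
    intro s hs t ht
    have hS := hτδ s hs
    have hT := hτδ t ht
    have hsep : ∀ n, (∀ i < n, δ i s = δ i t) →
        (∏ i ∈ Finset.range n, (m i : ℝ)) * |s - t| = |τ n s - τ n t| := by
      intro n
      induction n with
      | zero => intro _; simp [hS.1, hT.1]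
      | succ n ih =>
        intro h
        rw [Finset.prod_range_succ, mul_right_comm, ih fun i hi => h i (hi.trans n.lt_succ_self)]
        have h1 := (hS.2 n).2.2.2
        have h2 := (hT.2 n).2.2.2
        rw [h n n.lt_succ_self] at h1
        have h3 : τ (n + 1) s - τ (n + 1) t = (τ n s - τ n t) * m n := by linarith
        rw [h3, abs_mul, Nat.abs_cast]
    by_cases hall : ∀ n, δ n s = δ n t
      -- equal digits force equal points
    · have h0 : |s - t| ≤ 0 := by
        by_contra hcon
        rw [not_le] at hcon
        obtain ⟨n, hn⟩ := ((tendsto_pow_atTop_atTop_of_one_lt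
          (one_lt_two : (1 : ℝ) < 2)).eventually_gt_atTop (1 / |s - t|)).exists
        rw [div_lt_iff₀ hcon] at hn
        have h1 := hsep n fun i _ => hall i
        have h2 : (2 : ℝ) ^ n ≤ ∏ i ∈ Finset.range n, (m i : ℝ) := by
          calc (2 : ℝ) ^ n = ∏ i ∈ Finset.range n, (2 : ℝ) := by simp
            _ ≤ _ := Finset.prod_le_prod (fun _ _ => by norm_num) fun i _ => hm3 i
        have h3 : |τ n s - τ n t| ≤ 1 := by
          have := hS.2 n; have := hT.2 n
          rw [abs_le]; constructor <;> linarith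
        have h4 := mul_le_mul_of_nonneg_right h2 hcon.le
        linarith
      refine h0.trans (by positivity)
    · rw [not_forall] at hall
      classical
      set n := Nat.find hall with hn
      have hne : δ n s ≠ δ n t := Nat.find_spec hall
      have hlt : ∀ i < n, δ i s = δ i t := fun i hi => not_not.mp (Nat.find_min hall hi)
      have h1 := hsep n hlt
      have h2 := prod_mul_le_abs_sub (hx s) (hx t) hE0 (hxE s hs) (hxE t ht) n
        (fun i hi => by rw [hlt i hi])
      set k : ℝ := |(δ n s : ℝ) - δ n t| with hk
      have hk1 : 1 ≤ k := by
        have : (1 : ℤ) ≤ |(δ n s : ℤ) - δ n t| :=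
          Int.one_le_abs (sub_ne_zero.mpr (by exact_mod_cast hne))
        rw [hk]; exact_mod_cast this
      have hmn := hm3 n
      have hkm : k ≤ m n := by
        have a1 : (δ n s : ℝ) < m n := by exact_mod_cast (hS.2 n).2.2.1
        have a2 : (δ n t : ℝ) < m n := by exact_mod_cast (hT.2 n).2.2.1
        have a3 : (0 : ℝ) ≤ δ n s := Nat.cast_nonneg _
        have a4 : (0 : ℝ) ≤ δ n t := Nat.cast_nonneg _
        rw [hk, abs_le]; constructor <;> linarith
      -- the mixed-radix remainders of `s` and `t` at order `n` differ by at most `2k/m n`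
      have hup : |τ n s - τ n t| ≤ 2 * (k / m n) := by
        rw [← mul_div_assoc, le_div_iff₀ (by linarith)]
        have e1 := (hS.2 n).2.2.2
        have e2 := (hT.2 n).2.2.2
        have e3 : (τ n s - τ n t) * m n =
          ((δ n s : ℝ) - δ n t) + (τ (n + 1) s - τ (n + 1) t) := by linarith
        have e4 : |τ n s - τ n t| * m n = |(τ n s - τ n t) * m n| := by
          rw [abs_mul, Nat.abs_cast]
        rw [e4, e3]
        refine (abs_add_le _ _).trans ?_
        have e5 : |τ (n + 1) s - τ (n + 1) t| ≤ 1 := by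
          have := hS.2 (n + 1); have := hT.2 (n + 1)
          rw [abs_le]; constructor <;> linarith
        linarith
      -- `|1/x s n - 1/x t n| ≥ k - 1/2 ≥ k/2`, since `k ≥ 1` and the tails lie in `(0, 1/2]`
      have hlow : k / m n / (32 * E n) ≤ |x s n - x t n| := by
        have es : 1 / x s n = ((N n + δ n s : ℕ) : ℝ) + x s (n + 1) := by
          rw [(hx s n).2.2]; simp
        have et : 1 / x t n = ((N n + δ n t : ℕ) : ℝ) + x t (n + 1) := by
          rw [(hx t n).2.2]; simp
        have ps := (hx s n).1
        have pt := (hx t n).1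
        have e : x s n - x t n = x s n * x t n *
            (((δ n t : ℝ) - δ n s) + (x t (n + 1) - x s (n + 1))) := by
          have : ((δ n t : ℝ) - δ n s) + (x t (n + 1) - x s (n + 1)) = 1 / x t n - 1 / x s n := by
            rw [es, et]; push_cast; ring
          rw [this]; field_simp
        have e5 : |x t (n + 1) - x s (n + 1)| ≤ 1 / 2 := by
          have := hx s (n + 1); have := hx t (n + 1)
          rw [abs_le]; constructor <;> linarith
        have e6 : k / 2 ≤ |((δ n t : ℝ) - δ n s) + (x t (n + 1) - x s (n + 1))| := by
          have a1 := abs_sub_abs_le_abs_add ((δ n t : ℝ) - δ n s) (x t (n + 1) - x s (n + 1))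
          rw [abs_sub_comm (δ n t : ℝ), ← hk] at a1
          linarith
        have hEn := hE0 n
        have hb : 1 / (4 * E n ^ 2) ≤ x s n * x t n := by
          calc 1 / (4 * E n ^ 2) = 1 / (2 * E n) * (1 / (2 * E n)) := by field_simp; norm_num
            _ ≤ x s n * x t n := by gcongr <;> [exact hxE s hs n; exact hxE t ht n]
        rw [e, abs_mul, abs_of_pos (mul_pos ps pt)]
        calc k / m n / (32 * E n) ≤ k / (E n / 4) / (32 * E n) := by gcongr; exact hm1 n
          _ = 1 / (4 * E n ^ 2) * (k / 2) := by field_simp; norm_num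
          _ ≤ _ := by gcongr
      set κ := k / m n with hκ
      have hκ0 : 0 < κ := by positivity
      have hκ1 : κ ≤ 1 := (div_le_one (by linarith)).mpr hkm
      set S := ∑ i ∈ Finset.range n, A i with hSdef
      have hM : Real.exp (S - 2 * n) ≤ ∏ i ∈ Finset.range n, (m i : ℝ) := by
        have : S - 2 * n = ∑ i ∈ Finset.range n, (A i - 2) := by
          rw [Finset.sum_sub_distrib]; simp [hSdef, mul_comm]
        rw [this, Real.exp_sum]
        refine Finset.prod_le_prod (fun _ _ => (Real.exp_pos _).le) fun i _ => ?_
        refine le_trans ?_ (hm1 i)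
        rw [Real.exp_sub]
        have := four_le_exp_two
        have := hE0 i
        change E i / _ ≤ _
        gcongr
      have hW : ∏ i ∈ Finset.range n, (4 * E i ^ 2) ≤ Real.exp (2 * S + 2 * n) := by
        have : 2 * S + 2 * n = ∑ i ∈ Finset.range n, (2 + (A i + A i)) := by
          rw [Finset.sum_add_distrib, Finset.sum_add_distrib]
          simp only [Finset.sum_const, Finset.card_range, nsmul_eq_mul]
          rw [← hSdef]; ring
        rw [this, Real.exp_sum]
        refine Finset.prod_le_prod (fun i _ => by have := hE0 i; positivity) fun i _ => ?_
        rw [Real.exp_add, Real.exp_add, ← sq]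
        have := four_le_exp_two
        gcongr
      have hst : |s - t| ≤ 2 * κ * Real.exp (-(S - 2 * n)) := by
        rw [Real.exp_neg, ← div_eq_mul_inv, le_div_iff₀ (Real.exp_pos _)]
        calc |s - t| * Real.exp (S - 2 * n) ≤ |s - t| * ∏ i ∈ Finset.range n, (m i : ℝ) := by
              gcongr
          _ = |τ n s - τ n t| := by rw [mul_comm, h1]
          _ ≤ 2 * κ := hup
      have hxy : κ * (1 / 32) * Real.exp (-(A n + 2 * S + 2 * n)) ≤ |x s 0 - x t 0| := by
        rw [Real.exp_neg, ← div_eq_mul_inv, div_le_iff₀ (Real.exp_pos _)]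
        have e1 : Real.exp (A n + 2 * S + 2 * n) = E n * Real.exp (2 * S + 2 * n) := by
          rw [add_assoc, Real.exp_add]
        have hEn := hE0 n
        calc κ * (1 / 32) = κ / (32 * E n) * E n := by field_simp
          _ ≤ |x s n - x t n| * E n := by gcongr
          _ ≤ (∏ i ∈ Finset.range n, (4 * E i ^ 2)) * |x s 0 - x t 0| * E n := by gcongr
          _ ≤ Real.exp (2 * S + 2 * n) * |x s 0 - x t 0| * E n := by gcongr
          _ = _ := by rw [e1]; ring
      have hr' : (0 : ℝ) ≤ r := r.coe_nonneg
      have hpow : κ * (1 / 32) * Real.exp (-(S - 2 * n + C)) ≤ |x s 0 - x t 0| ^ (r : ℝ) := by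
        calc κ * (1 / 32) * Real.exp (-(S - 2 * n + C))
            ≤ κ ^ (r : ℝ) * (1 / 32) ^ (r : ℝ) *
              Real.exp (-(r * (A n + 2 * S + 2 * n))) := by
              gcongr
              · exact Real.self_le_rpow_of_le_one hκ0.le hκ1 hr1
              · exact Real.self_le_rpow_of_le_one (by norm_num) (by norm_num) hr1
              · exact hC n
          _ = (κ * (1 / 32) * Real.exp (-(A n + 2 * S + 2 * n))) ^ (r : ℝ) := by
              rw [Real.mul_rpow (by positivity) (Real.exp_pos _).le,
                Real.mul_rpow hκ0.le (by norm_num), ← Real.exp_mul]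
              ring_nf
          _ ≤ _ := by gcongr
      calc |s - t| ≤ 2 * κ * Real.exp (-(S - 2 * n)) := hst
        _ = 64 * Real.exp C * (κ * (1 / 32) * Real.exp (-(S - 2 * n + C))) := by
            have : Real.exp (-(S - 2 * n)) = Real.exp C * Real.exp (-(S - 2 * n + C)) := by
              rw [← Real.exp_add]; ring_nf
            rw [this]; ring
        _ ≤ _ := by gcongr
  refine (le_dimH_image_of_holder_inv hr0 (by positivity) hhol).trans (dimH_mono ?_)
  rintro _ ⟨t, ht, rfl⟩
  refine ⟨⟨(hx t 0).1.le, by linarith [(hx t 0).2.1]⟩, fun i => ?_⟩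
  have := cfA_of_tails (a := fun i => N i + δ i t) (hx t) i
  simp only [this]
  refine ⟨?_, hdig t ht i⟩
  push_cast
  have : (0 : ℝ) ≤ δ i t := Nat.cast_nonneg _
  linarith [hN1 i]

/-! ### The lower bound -/

/-- The largest sequence below `L` growing at most by the factor `c` per step, cut off below at
`10`. It touches `L` infinitely often because `L` drops below every multiple of `cⁿ`. -/
lemma exists_slow_minorant {L : ℕ → ℝ} (hL0 : ∀ i, 0 < L i) (hL : Tendsto L atTop atTop)
    {c : ℝ} (hc : 1 < c) (hfreq : ∀ η > 0, ∃ᶠ n in atTop, L n < η * c ^ n) :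
    ∃ A : ℕ → ℝ, (∀ i, 10 ≤ A i) ∧ (∀ i, A (i + 1) ≤ c * A i) ∧ Tendsto A atTop atTop ∧
      (∀ᶠ i in atTop, A i ≤ L i) ∧ ∃ᶠ i in atTop, A i = L i := by
  let B : ℕ → ℝ := fun n => Nat.rec (L 0) (fun i v => min (L (i + 1)) (c * v)) n
  have Bs : ∀ i, B (i + 1) = min (L (i + 1)) (c * B i) := fun i => rfl
  have hc0 : 0 < c := by linarith
  have hB0 : ∀ i, 0 < B i := by
    intro i
    induction i with
    | zero => exact hL0 0
    | succ i ih => rw [Bs]; exact lt_min (hL0 _) (mul_pos hc0 ih)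
  have hBL : ∀ i, B i ≤ L i := by
    intro i
    cases i with
    | zero => exact le_rfl
    | succ i => rw [Bs]; exact min_le_left _ _
  have hBc : ∀ i, B (i + 1) ≤ c * B i := fun i => by rw [Bs]; exact min_le_right _ _
  have hBtop : Tendsto B atTop atTop := by
    rw [tendsto_atTop]
    intro M
    obtain ⟨J, hJ⟩ := eventually_atTop.mp (hL.eventually_ge_atTop (max M 0))
    have hmin : ∀ k, min (max M 0) (c ^ k * B J) ≤ B (J + k) := by
      intro k
      induction k with
      | zero => simp
      | succ k ih =>
        rw [← add_assoc, Bs]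
        refine le_min ((min_le_left _ _).trans (hJ _ (by omega))) ?_
        have h1 := mul_le_mul_of_nonneg_left ih hc0.le
        refine le_trans ?_ h1
        rw [mul_min_of_nonneg _ _ hc0.le]
        refine min_le_min ?_ (by rw [pow_succ']; linarith)
        exact le_mul_of_one_le_left (le_max_right _ _) hc.le
    have hlim : Tendsto (fun k : ℕ => c ^ k * B J) atTop atTop :=
      (tendsto_pow_atTop_atTop_of_one_lt hc).atTop_mul_const (hB0 J)
    obtain ⟨k0, hk0⟩ := eventually_atTop.mp (hlim.eventually_ge_atTop (max M 0))
    filter_upwards [eventually_ge_atTop (J + k0)] with i hi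
    obtain ⟨k, rfl⟩ := Nat.exists_eq_add_of_le (show J ≤ i by omega)
    have h1 := hmin k
    rw [min_eq_left (hk0 k (by omega))] at h1
    exact (le_max_left _ _).trans h1
  have hBfreq : ∃ᶠ i in atTop, B i = L i := by
    by_contra hcon
    rw [not_frequently] at hcon
    obtain ⟨J, hJ⟩ := eventually_atTop.mp hcon
    have hgeo : ∀ k, B (J + k) = c ^ k * B J := by
      intro k
      induction k with
      | zero => simp
      | succ k ih =>
        have h1 : B (J + k + 1) ≠ L (J + k + 1) := hJ (J + k + 1) (by omega)
        rw [Bs] at h1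
        have h2 : c * B (J + k) ≤ L (J + k + 1) := by
          by_contra h3
          exact h1 (min_eq_left (not_le.mp h3).le)
        rw [← add_assoc, Bs, min_eq_right h2, ih]; ring
    obtain ⟨n, hn1, hn2⟩ := ((hfreq (B J / c ^ J) (div_pos (hB0 J) (by positivity))).and_eventually
      (eventually_ge_atTop J)).exists
    obtain ⟨k, rfl⟩ := Nat.exists_eq_add_of_le hn2
    have h1 := hBL (J + k)
    rw [hgeo] at h1
    have h2 : B J / c ^ J * c ^ (J + k) = c ^ k * B J := by
      rw [pow_add]; field_simp
    linarith
  refine ⟨fun i => max 10 (B i), fun i => le_max_left _ _, fun i => ?_, ?_, ?_, ?_⟩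
  · rw [mul_max_of_nonneg _ _ hc0.le]
    exact max_le_max (by linarith) (hBc i)
  · exact tendsto_atTop_mono (fun i => le_max_right _ _) hBtop
  · filter_upwards [hL.eventually_ge_atTop 10] with i hi
    exact max_le hi (hBL i)
  · refine (hBfreq.and_eventually (hL.eventually_ge_atTop 10)).mono ?_
    rintro i ⟨h1, h2⟩
    change max 10 (B i) = L i
    rw [h1]; exact max_eq_right h2

/-- The exponent condition of `le_dimH_digits` for a sequence of growth factor at most `c` and any
`r < 1/(1+c)`: growth gives `Aₙ ≤ (c - 1) Sₙ + A₀`, and the linear terms are absorbed because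
`Sₙ / n → ∞`. -/
lemma exists_holder_const {A : ℕ → ℝ} {c r : ℝ} (hA : ∀ i, 10 ≤ A i)
    (hAc : ∀ i, A (i + 1) ≤ c * A i) (hAtop : Tendsto A atTop atTop)
    (hr0 : 0 ≤ r) (hr1 : r ≤ 1) (hrc : r * (1 + c) < 1) :
    ∃ C : ℝ, ∀ n : ℕ, r * (A n + 2 * (∑ i ∈ Finset.range n, A i) + 2 * n) ≤
      (∑ i ∈ Finset.range n, A i) - 2 * n + C := by
  set S : ℕ → ℝ := fun n => ∑ i ∈ Finset.range n, A i with hS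
  have hSs : ∀ n, S (n + 1) = S n + A n := fun n => Finset.sum_range_succ _ _
  have hS0 : ∀ n, 0 ≤ S n := fun n => Finset.sum_nonneg fun i _ => by linarith [hA i]
  have hgrow : ∀ n, S (n + 1) ≤ c * S n + A 0 := by
    intro n
    induction n with
    | zero => simp [hS]
    | succ n ih =>
      have e : c * S (n + 1) = c * S n + c * A n := by rw [hSs n]; ring
      rw [hSs (n + 1)]
      linarith [hAc n]
  set ρ := 1 - r * (1 + c) with hρ
  have hρ0 : 0 < ρ := by linarith
  obtain ⟨J, hJ⟩ := eventually_atTop.mp (hAtop.eventually_ge_atTop (4 / ρ))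
  have hlow : ∀ n : ℕ, 4 / ρ * ((n : ℝ) - J) ≤ S n := by
    intro n
    have hK : 0 < 4 / ρ := by positivity
    induction n with
    | zero =>
      have : (0 : ℝ) ≤ J := Nat.cast_nonneg _
      have := hS0 0
      push_cast
      nlinarith
    | succ n ih =>
      by_cases hn : n < J
      · have : ((n + 1 : ℕ) : ℝ) ≤ J := by exact_mod_cast hn
        have := hS0 (n + 1)
        nlinarith
      · have h1 := hJ n (by omega)
        rw [hSs]; push_cast
        linarith
  refine ⟨4 * J + A 0, fun n => ?_⟩
  change r * (A n + 2 * S n + 2 * n) ≤ S n - 2 * n + _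
  have h1 : A n ≤ (c - 1) * S n + A 0 := by linarith [hgrow n, hSs n]
  have h2 : 4 * ((n : ℝ) - J) ≤ ρ * S n := by
    have := mul_le_mul_of_nonneg_left (hlow n) hρ0.le
    rwa [← mul_assoc, mul_div_cancel₀ _ hρ0.ne'] at this
  have hn0 : (0 : ℝ) ≤ n := Nat.cast_nonneg _
  calc r * (A n + 2 * S n + 2 * n) ≤ r * ((1 + c) * S n + (A 0 + 2 * n)) := by
        exact mul_le_mul_of_nonneg_left (by linarith) hr0
    _ = r * (1 + c) * S n + r * (A 0 + 2 * n) := by ring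
    _ ≤ r * (1 + c) * S n + 1 * (A 0 + 2 * n) := by
        have := hA 0
        gcongr
    _ = S n - ρ * S n + A 0 + 2 * n := by rw [hρ]; ring
    _ ≤ _ := by linarith

lemma one_le_of_liminf_eq_top {Φ : ℕ → ℝ} (hΦ1 : ∀ n, 1 < Φ n)
    (hB : liminf (fun n : ℕ => ((Real.log (Φ n) / n : ℝ) : EReal)) atTop = ⊤)
    {b : ℝ≥0∞}
    (hb : ENNReal.log b =
      liminf (fun n : ℕ => ((Real.log (Real.log (Φ n)) / n : ℝ) : EReal)) atTop) :
    1 ≤ b := by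
  rw [← ENNReal.zero_le_log_iff, hb]
  refine le_liminf_of_le (by isBoundedDefault) ?_
  filter_upwards [eventually_pow_le_of_liminf_eq_top hΦ1 hB (Real.exp_pos 1),
    eventually_ge_atTop 1] with n hn hn1
  have h1 : (n : ℝ) ≤ Real.log (Φ n) := by
    rw [Real.le_log_iff_exp_le (by linarith [hΦ1 n])]
    rwa [← Real.exp_nat_mul, mul_one] at hn
  have h2 : (1 : ℝ) ≤ n := by exact_mod_cast hn1
  have h3 : 0 ≤ Real.log (Real.log (Φ n)) := Real.log_nonneg (by linarith)
  exact_mod_cast (by positivity : (0 : ℝ) ≤ Real.log (Real.log (Φ n)) / n)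

/-- If `b < c` then `log Φ(n)` drops below every positive multiple of `cⁿ` infinitely often. -/
lemma frequently_log_lt {Φ : ℕ → ℝ} (hΦ1 : ∀ n, 1 < Φ n) {b : ℝ≥0∞}
    (hb : ENNReal.log b =
      liminf (fun n : ℕ => ((Real.log (Real.log (Φ n)) / n : ℝ) : EReal)) atTop)
    {c : ℝ} (hbc : b < ENNReal.ofReal c) {η : ℝ} (hη : 0 < η) :
    ∃ᶠ n in atTop, Real.log (Φ n) < η * c ^ n := by
  obtain ⟨c', hc1, hc2⟩ := ENNReal.lt_iff_exists_nnreal_btwn.mp hbc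
  have hc'0 : (0 : ℝ) < c' := by
    have : (0 : ℝ≥0∞) < c' := lt_of_le_of_lt zero_le hc1
    exact_mod_cast this
  have hcc : (c' : ℝ) < c := by
    rw [← ENNReal.ofReal_coe_nnreal] at hc2
    exact (ENNReal.ofReal_lt_ofReal_iff_of_nonneg c'.coe_nonneg).mp hc2
  have h := frequently_lt_of_liminf_lt (f := atTop)
    (u := fun n : ℕ => ((Real.log (Real.log (Φ n)) / n : ℝ) : EReal))
    (b := ((Real.log c' : ℝ) : EReal)) (by isBoundedDefault)
    (by
      rw [← hb, ← ENNReal.log_ofReal_of_pos hc'0, ENNReal.ofReal_coe_nnreal]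
      exact ENNReal.log_lt_log hc1)
  have hlim : Tendsto (fun n : ℕ => (c / c') ^ n) atTop atTop :=
    tendsto_pow_atTop_atTop_of_one_lt ((one_lt_div hc'0).mpr hcc)
  refine ((h.and_eventually (hlim.eventually_gt_atTop (1 / η))).and_eventually
    (eventually_gt_atTop 0)).mono ?_
  rintro n ⟨⟨h1, h2⟩, h3⟩
  rw [EReal.coe_lt_coe_iff, div_lt_iff₀ (by exact_mod_cast h3)] at h1
  have h0 : 0 < Real.log (Φ n) := Real.log_pos (hΦ1 n)
  have h4 : Real.log (Φ n) < (c' : ℝ) ^ n := by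
    rw [← Real.log_lt_log_iff h0 (by positivity), Real.log_pow]; linarith
  rw [div_pow, div_lt_div_iff₀ hη (by positivity)] at h2
  linarith

lemma le_dimH_Fset {Φ : ℕ → ℝ} (hΦ1 : ∀ n, 1 < Φ n) (hΦ : Tendsto Φ atTop atTop)
    (hB : liminf (fun n : ℕ => ((Real.log (Φ n) / n : ℝ) : EReal)) atTop = ⊤)
    {b : ℝ≥0∞}
    (hb : ENNReal.log b =
      liminf (fun n : ℕ => ((Real.log (Real.log (Φ n)) / n : ℝ) : EReal)) atTop) :
    (1 + b)⁻¹ ≤ dimH (Fset Φ) := by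
  refine le_of_forall_lt_imp_le_of_dense fun r hr => ?_
  induction r with
  | top => simp at hr
  | coe r =>
  rcases eq_or_ne r 0 with rfl | hr0
  · simp
  have hr0' : 0 < r := pos_iff_ne_zero.mpr hr0
  have hrpos : (0 : ℝ) < r := by exact_mod_cast hr0'
  have hb1 := one_le_of_liminf_eq_top hΦ1 hB hb
  have hlt : 1 + b < ENNReal.ofReal (1 / r) := by
    have := ENNReal.inv_lt_inv.mpr hr
    rwa [inv_inv, ← ENNReal.ofReal_coe_nnreal, ← ENNReal.ofReal_inv_of_pos hrpos,
      ← one_div] at this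
  have hbtop : b ≠ ⊤ := by rintro rfl; simp at hlt
  lift b to ℝ≥0 using hbtop
  have hb1' : (1 : ℝ) ≤ b := by exact_mod_cast hb1
  have hlt' : 1 + (b : ℝ) < 1 / r := by
    rw [show (1 + (b : ℝ≥0∞)) = ENNReal.ofReal (1 + b) by
      rw [ENNReal.ofReal_add (by norm_num) b.coe_nonneg, ENNReal.ofReal_one,
        ENNReal.ofReal_coe_nnreal]] at hlt
    exact (ENNReal.ofReal_lt_ofReal_iff_of_nonneg (by positivity)).mp hlt
  obtain ⟨c, hc1, hc2⟩ := exists_between (show (b : ℝ) < 1 / r - 1 by linarith)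
  have hrc : (r : ℝ) * (1 + c) < 1 := by
    have : 1 + c < 1 / r := by linarith
    rw [lt_div_iff₀ hrpos] at this
    linarith
  have hr1 : (r : ℝ) ≤ 1 := by nlinarith
  obtain ⟨A, hA10, hAc, hAtop, hAL, hAeq⟩ := exists_slow_minorant
    (L := fun n => Real.log (Φ n)) (fun i => Real.log_pos (hΦ1 i))
    (Real.tendsto_log_atTop.comp hΦ) (c := c) (by linarith)
    (fun η hη => frequently_log_lt hΦ1 hb
      (by
        rw [← ENNReal.ofReal_coe_nnreal]
        exact (ENNReal.ofReal_lt_ofReal_iff_of_nonneg b.coe_nonneg).mpr hc1) hη)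
  obtain ⟨C, hC⟩ := exists_holder_const hA10 hAc hAtop hrpos.le hr1 hrc
  have key := le_dimH_digits hA10 hr0' hr1 hC
  set D := {x : ℝ | x ∈ Set.Ico (0 : ℝ) 1 ∧
      ∀ i, Real.exp (A i) / 2 ≤ cfA (i + 1) x ∧ (cfA (i + 1) x : ℝ) < Real.exp (A i)}
  -- rational points form a countable set and do not affect the dimension
  have hsub : D ⊆ Fset Φ ∪ Set.range ((↑) : ℚ → ℝ) := by
    rintro x ⟨hx, hd⟩
    by_cases hi : Irrational x
    swap
    · right; exact not_not.mp hi
    left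
    have hexp : ∀ n, Real.exp (Real.log (Φ n)) = Φ n := fun n =>
      Real.exp_log (by linarith [hΦ1 n])
    refine ⟨hx, hi, ?_, ?_⟩
    · refine (hAeq.and_eventually (eventually_ge_atTop 1)).mono ?_
      rintro n ⟨hn, hn1⟩
      obtain ⟨k, rfl⟩ : ∃ k, n = k + 1 := ⟨n - 1, by omega⟩
      -- where `A n = log Φ(n)`, `aₙ₊₁ ≥ Φ(n)/2` and `aₙ ≥ 2`
      have h1 := (hd (k + 1)).1
      rw [hn, hexp] at h1
      have h2 := (hd k).1
      have h3 := Real.add_one_le_exp (A k)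
      have h4 := hA10 k
      have h5 : (2 : ℝ) ≤ cfA (k + 1) x := by linarith
      have h6 := hΦ1 (k + 1)
      nlinarith
    · filter_upwards [hAL] with n hn
      refine (hd n).2.trans_le ?_
      rw [← hexp n]
      exact Real.exp_le_exp.mpr hn
  refine key.trans ((dimH_mono hsub).trans ?_)
  rw [dimH_union, dimH_countable (Set.countable_range _)]
  simp

/-! ### Conclusion -/

theorem dimH_Fset_of_B_eq_top (Φ : ℕ → ℝ) (hΦ1 : ∀ n, 1 < Φ n)
    (hΦ : Tendsto Φ atTop atTop)
    (hB : liminf (fun n : ℕ => ((Real.log (Φ n) / n : ℝ) : EReal)) atTop = ⊤)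
    (b : ℝ≥0∞)
    (hb : ENNReal.log b =
      liminf (fun n : ℕ => ((Real.log (Real.log (Φ n)) / n : ℝ) : EReal)) atTop) :
    dimH (Fset Φ) = (1 + b)⁻¹ := by
  exact le_antisymm (dimH_Fset_le hΦ1 hB hb) (le_dimH_Fset hΦ1 hΦ hB hb)
end

section
/- (Borel–Bernstein) Let Φ : ℕ → (1,∞) be an arbitrary function. The Lebesgue measure of E_1(Φ) = { x ∈ [0,1) : a_n(x) ≥ Φ(n) for infinitely many n ∈ ℕ } is zero if the series Σ_{n=1}^∞ 1/Φ(n) converges, and is full (measure 1) if the series diverges. -/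
/-!
The proof studies the law of `T^n x` conditionally on the first `n` partial quotients of a uniform
`x ∈ (0,1)`. This law always has a density of the form `(1 + r) / (1 + r t)²` with `r ∈ [0,1]`
(`r = q_{n-1}/q_n`). Write `ν r` for the corresponding measure on `(0,1)`. The family is stable
under the inverse branches `s ↦ 1 / (k + s)` of the Gauss map: restricted to `{a₁ = k}` and pushed
forward by `T`, the measure `ν r` becomes `(1 + r) / ((k + r)(k + r + 1))` times `ν (1 / (k + r))`
(`nu_branch`). The weights telescope, so:

* a bound on the mass of a set that is uniform in `r` passes to its preimages under the iterates
  of `T` (`nu_iterate_le`);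
* the event `a₁ < φ₀, …, a_n < φ_{n-1}` has `ν r`-mass at most `2 ∏ (1 - 1/(2 φ_i))`
  (`nu_avoid_le`).

Since the densities are at most `2`, the event `a_n ≥ Φ n` has mass at most `2 / Φ n`, and the
convergent case is the Borel–Cantelli lemma. In the divergent case the product tends to `0`, so
for every `m` the set where `a_n < Φ n` for all `n > m` is null, and hence so is the complement of
`E1 Φ`.
-/

open Filter Topology MeasureTheory
open scoped ENNReal NNReal

/-- The set `E_1(Φ)` of irrational `x ∈ [0,1)` with `a_n(x) ≥ Φ(n)` for infinitely many `n`. -/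
def E1 (Φ : ℕ → ℝ) : Set ℝ :=
  {x | x ∈ Set.Ico (0 : ℝ) 1 ∧ Irrational x ∧ ∃ᶠ n in atTop, Φ n ≤ (cfA n x : ℝ)}

/-! ### The family of conditional laws -/

/-- The density of `ν r`, the conditional density of `T^n x` when `q_{n-1}/q_n = r`. -/
noncomputable def dens (r t : ℝ) : ℝ≥0∞ := ENNReal.ofReal ((1 + r) / (1 + r * t) ^ 2)

/-- The measure on `(0,1)` with density `(1 + r) / (1 + r t)²`. For `r = 0` it is Lebesgue
measure. -/
noncomputable def nu (r : ℝ) : Measure ℝ :=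
  (volume.restrict (Set.Ioo 0 1)).withDensity (dens r)

lemma measurable_dens (r : ℝ) : Measurable (dens r) := by
  unfold dens; fun_prop

lemma nu_apply (r : ℝ) {S : Set ℝ} (hS : MeasurableSet S) :
    nu r S = ∫⁻ t in S ∩ Set.Ioo 0 1, dens r t := by
  rw [nu, withDensity_apply _ hS, Measure.restrict_restrict hS]

lemma nu_zero : nu 0 = volume.restrict (Set.Ioo 0 1) := by
  have h : dens 0 = 1 := by ext t; simp [dens]
  rw [nu, h, withDensity_one]

lemma nu_le_two_mul {r : ℝ} (hr : r ∈ Set.Icc (0 : ℝ) 1) {S : Set ℝ} (hS : MeasurableSet S) :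
    nu r S ≤ 2 * volume (S ∩ Set.Ioo 0 1) := by
  rw [nu_apply r hS, ← setLIntegral_const]
  refine setLIntegral_mono measurable_const fun t ht => ?_
  have h0 : 0 ≤ r * t := mul_nonneg hr.1 ht.2.1.le
  rw [dens, ← ENNReal.ofReal_ofNat]
  apply ENNReal.ofReal_le_ofReal
  rw [div_le_iff₀ (by positivity)]
  nlinarith [hr.2]

lemma nu_le_two {r : ℝ} (hr : r ∈ Set.Icc (0 : ℝ) 1) {S : Set ℝ} (hS : MeasurableSet S) :
    nu r S ≤ 2 := by
  calc nu r S ≤ 2 * volume (S ∩ Set.Ioo 0 1) := nu_le_two_mul hr hS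
    _ ≤ 2 * volume (Set.Ioo (0 : ℝ) 1) := by gcongr; exact Set.inter_subset_right
    _ = 2 := by simp

/-- The inverse branch of the Gauss map with first partial quotient `j + 1`. -/
noncomputable def branch (j : ℕ) (s : ℝ) : ℝ := 1 / ((j : ℝ) + 1 + s)

/-- The `ν r`-mass of the set `{a₁ = j + 1}`, for `r ≥ 0`. -/
noncomputable def weight (r : ℝ) (j : ℕ) : ℝ := (1 + r) / (((j : ℝ) + 1 + r) * ((j : ℝ) + 2 + r))

lemma weight_nonneg {r : ℝ} (hr : 0 ≤ r) (j : ℕ) : 0 ≤ weight r j := by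
  unfold weight; positivity

lemma sum_weight {r : ℝ} (hr : 0 ≤ r) (N : ℕ) :
    ∑ j ∈ Finset.range N, weight r j = 1 - (1 + r) / ((N : ℝ) + 1 + r) := by
  induction N with
  | zero =>
    have : 1 + r ≠ 0 := by positivity
    simp [this]
  | succ N ih =>
    rw [Finset.sum_range_succ, ih, weight]
    push_cast
    have h1 : (N : ℝ) + 1 + r ≠ 0 := by positivity
    have h2 : (N : ℝ) + 2 + r ≠ 0 := by positivity
    have h3 : (N : ℝ) + 1 + 1 + r ≠ 0 := by positivity
    field_simp
    ring

lemma branch_param_mem {r : ℝ} (hr : 0 ≤ r) (j : ℕ) :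
    1 / ((j : ℝ) + 1 + r) ∈ Set.Icc (0 : ℝ) 1 := by
  refine ⟨by positivity, ?_⟩
  rw [div_le_one (by positivity)]
  linarith [Nat.cast_nonneg (α := ℝ) j]

lemma measurableSet_branch_image (j : ℕ) {S : Set ℝ} (hS : MeasurableSet S) :
    MeasurableSet (branch j '' (S ∩ Set.Ioo 0 1)) := by
  have : branch j '' (S ∩ Set.Ioo 0 1) =
      (fun x : ℝ => 1 / x - ((j : ℝ) + 1)) ⁻¹' (S ∩ Set.Ioo 0 1) := by
    ext x
    constructor
    · rintro ⟨s, hs, rfl⟩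
      simpa [branch] using hs
    · intro hx
      exact ⟨_, hx, by simp [branch]⟩
  rw [this]
  exact (by fun_prop : Measurable fun x : ℝ => 1 / x - ((j : ℝ) + 1))
    (hS.inter measurableSet_Ioo)

/-- Stability of the family `ν` under the inverse branches of the Gauss map, by the change of
variables `t = 1 / (j + 1 + s)`. Equality holds, but only upper bounds are needed. -/
lemma nu_branch {r : ℝ} (hr : 0 ≤ r) (j : ℕ) {S : Set ℝ} (hS : MeasurableSet S) :
    nu r (branch j '' (S ∩ Set.Ioo 0 1)) ≤
      ENNReal.ofReal (weight r j) * nu (1 / ((j : ℝ) + 1 + r)) S := by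
  have hS' : MeasurableSet (S ∩ Set.Ioo (0 : ℝ) 1) := hS.inter measurableSet_Ioo
  have hd : ∀ s ∈ S ∩ Set.Ioo (0 : ℝ) 1, HasDerivWithinAt (branch j)
      (-1 / ((j : ℝ) + 1 + s) ^ 2) (S ∩ Set.Ioo 0 1) s := by
    intro s hs
    have hpos : (j : ℝ) + 1 + s ≠ 0 := by have := hs.2.1; positivity
    have h1 : HasDerivAt (fun s : ℝ => (j : ℝ) + 1 + s) 1 s :=
      (hasDerivAt_id s).const_add _
    have h2 := h1.fun_inv hpos
    have h3 : branch j = fun s : ℝ => ((j : ℝ) + 1 + s)⁻¹ := by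
      ext s; simp [branch]
    rw [h3]
    exact h2.hasDerivWithinAt
  have hinj : Set.InjOn (branch j) (S ∩ Set.Ioo (0 : ℝ) 1) := by
    intro s _ t _ hst
    simpa [branch] using hst
  calc nu r (branch j '' (S ∩ Set.Ioo 0 1))
      = ∫⁻ t in (branch j '' (S ∩ Set.Ioo 0 1)) ∩ Set.Ioo 0 1, dens r t :=
        nu_apply r (measurableSet_branch_image j hS)
    _ ≤ ∫⁻ t in branch j '' (S ∩ Set.Ioo 0 1), dens r t :=
        lintegral_mono_set Set.inter_subset_left
    _ = ∫⁻ s in S ∩ Set.Ioo 0 1,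
          ENNReal.ofReal |-1 / ((j : ℝ) + 1 + s) ^ 2| * dens r (branch j s) :=
        lintegral_image_eq_lintegral_abs_deriv_mul hS' hd hinj _
    _ = ∫⁻ s in S ∩ Set.Ioo 0 1,
          ENNReal.ofReal (weight r j) * dens (1 / ((j : ℝ) + 1 + r)) s := by
        refine setLIntegral_congr_fun hS' fun s hs => ?_
        have hs0 : 0 < s := hs.2.1
        simp only [dens, branch]
        rw [← ENNReal.ofReal_mul (abs_nonneg _), ← ENNReal.ofReal_mul (weight_nonneg hr j)]
        congr 1
        rw [abs_div, abs_neg, abs_one, abs_of_pos (by positivity), weight]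
        have h1 : (j : ℝ) + 1 + s ≠ 0 := by positivity
        have h2 : (j : ℝ) + 1 + r ≠ 0 := by positivity
        have h3 : (j : ℝ) + 2 + r ≠ 0 := by positivity
        have h4 : (j : ℝ) + 1 + s + r ≠ 0 := by positivity
        have e1 : 1 + r * (1 / ((j : ℝ) + 1 + s)) = ((j : ℝ) + 1 + s + r) / ((j : ℝ) + 1 + s) := by
          field_simp
        have e2 : 1 + 1 / ((j : ℝ) + 1 + r) * s = ((j : ℝ) + 1 + s + r) / ((j : ℝ) + 1 + r) := by
          field_simp; ring
        have e3 : 1 + 1 / ((j : ℝ) + 1 + r) = ((j : ℝ) + 2 + r) / ((j : ℝ) + 1 + r) := by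
          field_simp; ring
        rw [e1, e2, e3]
        field_simp
    _ = ENNReal.ofReal (weight r j) * nu (1 / ((j : ℝ) + 1 + r)) S := by
        rw [lintegral_const_mul _ (measurable_dens _), nu_apply _ hS]

/-! ### The Gauss map -/

lemma measurable_gaussMap : Measurable gaussMap := by
  unfold gaussMap
  refine Measurable.ite (measurableSet_singleton 0) measurable_const ?_
  fun_prop

lemma measurable_cfA (n : ℕ) : Measurable (cfA n) := by
  unfold cfA
  have := measurable_gaussMap.iterate (n - 1)
  exact Nat.measurable_floor.comp (measurable_const.div this)

lemma measurableSet_irrational' : MeasurableSet {x : ℝ | Irrational x} :=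
  IsGδ.setOfPred_irrational.measurableSet

lemma gaussMap_eq_fract {x : ℝ} (hx : Irrational x) : gaussMap x = Int.fract (1 / x) := by
  rw [gaussMap, if_neg hx.ne_zero, Int.self_sub_floor]

lemma irrational_gaussMap {x : ℝ} (hx : Irrational x) : Irrational (gaussMap x) := by
  rw [gaussMap_eq_fract hx, Int.fract, one_div]
  exact hx.inv.sub_intCast _

lemma mem_branch_image {x : ℝ} (hx : Irrational x) (hx01 : x ∈ Set.Ioo (0 : ℝ) 1) {S : Set ℝ}
    (hT : gaussMap x ∈ S) :
    1 ≤ cfA 1 x ∧ x ∈ branch (cfA 1 x - 1) '' (S ∩ Set.Ioo 0 1) := by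
  have hinv : 1 ≤ 1 / x := by
    rw [le_div_iff₀ hx01.1]; linarith [hx01.2]
  have h1 : 1 ≤ cfA 1 x := by
    simpa [cfA, Nat.one_le_floor_iff] using hinv
  refine ⟨h1, gaussMap x, ⟨hT, ?_, ?_⟩, ?_⟩
  · have h := (irrational_gaussMap hx).ne_zero
    rw [gaussMap_eq_fract hx] at h ⊢
    exact lt_of_le_of_ne (Int.fract_nonneg _) h.symm
  · rw [gaussMap_eq_fract hx]
    exact Int.fract_lt_one _
  · have h2 : ((cfA 1 x - 1 : ℕ) : ℝ) + 1 = (cfA 1 x : ℝ) := by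
      exact_mod_cast Nat.sub_add_cancel h1
    have h3 : (cfA 1 x : ℝ) = (⌊1 / x⌋ : ℝ) := by
      simp only [cfA, Nat.sub_self, Function.iterate_zero, id]
      exact natCast_floor_eq_intCast_floor (by linarith)
    rw [branch, h2, h3, gaussMap_eq_fract hx, Int.floor_add_fract, one_div_one_div]

lemma nu_congr_Ioo (r : ℝ) (S : Set ℝ) : nu r S = nu r (S ∩ Set.Ioo 0 1) := by
  refine measure_congr ?_
  have h : ∀ᵐ x ∂(nu r), x ∈ Set.Ioo (0 : ℝ) 1 :=
    (withDensity_absolutelyContinuous _ _).ae_le (ae_restrict_mem measurableSet_Ioo)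
  filter_upwards [h] with x hx
  simp only [eq_iff_iff]
  exact ⟨fun hS => ⟨hS, hx⟩, fun hS => hS.1⟩

/-! ### Propagation of uniform bounds -/

lemma nu_preimage_le {S : Set ℝ} (hS : MeasurableSet S) {M : ℝ≥0∞}
    (hM : ∀ s ∈ Set.Icc (0 : ℝ) 1, nu s S ≤ M) {r : ℝ} (hr : r ∈ Set.Icc (0 : ℝ) 1) :
    nu r {x | Irrational x ∧ gaussMap x ∈ S} ≤ M := by
  rw [nu_congr_Ioo]
  calc nu r ({x | Irrational x ∧ gaussMap x ∈ S} ∩ Set.Ioo 0 1)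
      ≤ nu r (⋃ j, branch j '' (S ∩ Set.Ioo 0 1)) := by
        refine measure_mono ?_
        rintro x ⟨⟨hx, hT⟩, hx01⟩
        exact Set.mem_iUnion.2 ⟨_, (mem_branch_image hx hx01 hT).2⟩
    _ ≤ ∑' j, nu r (branch j '' (S ∩ Set.Ioo 0 1)) := measure_iUnion_le _
    _ ≤ ∑' j, ENNReal.ofReal (weight r j) * M := by
        refine ENNReal.tsum_le_tsum fun j => (nu_branch hr.1 j hS).trans ?_
        gcongr
        exact hM _ (branch_param_mem hr.1 j)
    _ = (∑' j, ENNReal.ofReal (weight r j)) * M := ENNReal.tsum_mul_right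
    _ ≤ 1 * M := by
        gcongr
        rw [ENNReal.tsum_eq_iSup_nat]
        refine iSup_le fun N => ?_
        rw [← ENNReal.ofReal_sum_of_nonneg fun j _ => weight_nonneg hr.1 j, sum_weight hr.1,
          ENNReal.ofReal_le_one]
        have : 0 ≤ (1 + r) / ((N : ℝ) + 1 + r) := by have := hr.1; positivity
        linarith
    _ = M := one_mul M

lemma nu_iterate_le {S : Set ℝ} (hS : MeasurableSet S) {M : ℝ≥0∞}
    (hM : ∀ s ∈ Set.Icc (0 : ℝ) 1, nu s S ≤ M) (m : ℕ) {r : ℝ} (hr : r ∈ Set.Icc (0 : ℝ) 1) :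
    nu r {x | Irrational x ∧ gaussMap^[m] x ∈ S} ≤ M := by
  induction m generalizing r with
  | zero => exact (measure_mono fun x hx => hx.2).trans (hM r hr)
  | succ m ih =>
    have hS' : MeasurableSet {x | Irrational x ∧ gaussMap^[m] x ∈ S} :=
      measurableSet_irrational'.inter (measurable_gaussMap.iterate m hS)
    refine (measure_mono ?_).trans (nu_preimage_le hS' (fun s hs => ih hs) hr)
    rintro x ⟨hx, hT⟩
    exact ⟨hx, irrational_gaussMap hx, hT⟩

lemma cfA_iterate (m i : ℕ) (x : ℝ) : cfA (i + 1) (gaussMap^[m] x) = cfA (m + i + 1) x := by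
  simp only [cfA, Nat.add_sub_cancel]
  rw [← Function.iterate_add_apply, add_comm]

/-- The irrationals with `a_{i+1} < φ i` for all `i < n`. -/
def avoid (φ : ℕ → ℝ) (n : ℕ) : Set ℝ :=
  {x | Irrational x ∧ ∀ i < n, (cfA (i + 1) x : ℝ) < φ i}

lemma measurableSet_avoid (φ : ℕ → ℝ) (n : ℕ) : MeasurableSet (avoid φ n) := by
  have : avoid φ n = {x | Irrational x} ∩
      ⋂ i, ⋂ (_ : i < n), (cfA (i + 1)) ⁻¹' {k | (k : ℝ) < φ i} := by
    ext x; simp [avoid]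
  rw [this]
  exact measurableSet_irrational'.inter (MeasurableSet.iInter fun i => MeasurableSet.iInter fun _ =>
    measurable_cfA _ (MeasurableSet.of_discrete))

lemma nu_avoid_step {S : Set ℝ} (hS : MeasurableSet S) {M : ℝ≥0∞}
    (hM : ∀ s ∈ Set.Icc (0 : ℝ) 1, nu s S ≤ M) {c : ℝ} (hc : 1 < c)
    {r : ℝ} (hr : r ∈ Set.Icc (0 : ℝ) 1) :
    nu r {x | Irrational x ∧ (cfA 1 x : ℝ) < c ∧ gaussMap x ∈ S} ≤
      ENNReal.ofReal (1 - 1 / (2 * c)) * M := by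
  -- The admissible first partial quotients are `1, …, N`.
  obtain ⟨N, hN⟩ : ∃ N, ⌈c⌉₊ = N + 1 :=
    ⟨⌈c⌉₊ - 1, (Nat.sub_add_cancel (Nat.one_le_ceil_iff.2 (by linarith))).symm⟩
  have hNc : (N : ℝ) + 1 ≤ 2 * c := by
    have := Nat.ceil_lt_add_one (show 0 ≤ c by linarith)
    rw [hN] at this
    push_cast at this
    linarith
  rw [nu_congr_Ioo]
  calc nu r ({x | Irrational x ∧ (cfA 1 x : ℝ) < c ∧ gaussMap x ∈ S} ∩ Set.Ioo 0 1)
      ≤ nu r (⋃ j ∈ Finset.range N, branch j '' (S ∩ Set.Ioo 0 1)) := by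
        refine measure_mono ?_
        rintro x ⟨⟨hx, hlt, hT⟩, hx01⟩
        obtain ⟨h1, h2⟩ := mem_branch_image hx hx01 hT
        have h3 := Nat.lt_ceil.2 hlt
        exact Set.mem_biUnion (show cfA 1 x - 1 ∈ (Finset.range N : Set ℕ) by
          simp only [Finset.coe_range, Set.mem_Iio]; omega) h2
    _ ≤ ∑ j ∈ Finset.range N, nu r (branch j '' (S ∩ Set.Ioo 0 1)) :=
        measure_biUnion_finset_le _ _
    _ ≤ ∑ j ∈ Finset.range N, ENNReal.ofReal (weight r j) * M := by
        refine Finset.sum_le_sum fun j _ => (nu_branch hr.1 j hS).trans ?_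
        gcongr
        exact hM _ (branch_param_mem hr.1 j)
    _ = ENNReal.ofReal (1 - (1 + r) / ((N : ℝ) + 1 + r)) * M := by
        rw [← Finset.sum_mul, ← ENNReal.ofReal_sum_of_nonneg fun j _ => weight_nonneg hr.1 j,
          sum_weight hr.1]
    _ ≤ ENNReal.ofReal (1 - 1 / (2 * c)) * M := by
        have hr0 := hr.1
        have key : 1 / (2 * c) ≤ (1 + r) / ((N : ℝ) + 1 + r) := by
          rw [div_le_div_iff₀ (by positivity) (by positivity)]
          nlinarith [mul_nonneg hr0 (show 0 ≤ 2 * c - 1 by linarith)]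
        gcongr ENNReal.ofReal ?_ * _
        linarith

lemma nu_avoid_le (n : ℕ) (φ : ℕ → ℝ) (hφ : ∀ i, 1 < φ i) {r : ℝ}
    (hr : r ∈ Set.Icc (0 : ℝ) 1) :
    nu r (avoid φ n) ≤ ENNReal.ofReal (∏ i ∈ Finset.range n, (1 - 1 / (2 * φ i))) * 2 := by
  induction n generalizing φ r with
  | zero => simpa using nu_le_two hr (measurableSet_avoid φ 0)
  | succ n ih =>
    have hnn : ∀ i, 0 ≤ 1 - 1 / (2 * φ i) := fun i => by
      have := hφ i
      rw [sub_nonneg, div_le_one (by linarith)]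
      linarith
    have h := nu_avoid_step (measurableSet_avoid (fun i => φ (i + 1)) n)
      (fun s hs => ih (fun i => φ (i + 1)) (fun i => hφ _) hs) (hφ 0) hr
    rw [Finset.prod_range_succ', mul_comm (Finset.prod _ _), ENNReal.ofReal_mul (hnn 0), mul_assoc]
    refine (measure_mono ?_).trans h
    rintro x ⟨hx, hlt⟩
    refine ⟨hx, hlt 0 (by omega), irrational_gaussMap hx, fun i hi => ?_⟩
    have := cfA_iterate 1 i x
    rw [Function.iterate_one] at this
    rw [this, Nat.add_comm 1 i]
    exact hlt (i + 1) (by omega)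

lemma nu_iInter_avoid (φ : ℕ → ℝ) (hφ : ∀ i, 1 < φ i) (hdiv : ¬ Summable fun i => 1 / φ i)
    {r : ℝ} (hr : r ∈ Set.Icc (0 : ℝ) 1) : nu r (⋂ n, avoid φ n) = 0 := by
  have hpos : ∀ i, 0 ≤ 1 / φ i := fun i => by have := hφ i; positivity
  have hsum := (not_summable_iff_tendsto_nat_atTop_of_nonneg hpos).1 hdiv
  have hexp : Tendsto (fun n => Real.exp (-(1 / 2 * ∑ i ∈ Finset.range n, 1 / φ i))) atTop (𝓝 0) :=
    Real.tendsto_exp_neg_atTop_nhds_zero.comp (hsum.const_mul_atTop (by norm_num))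
  have hlim : Tendsto (fun n => ENNReal.ofReal
      (Real.exp (-(1 / 2 * ∑ i ∈ Finset.range n, 1 / φ i))) * 2) atTop (𝓝 0) := by
    have := ENNReal.Tendsto.mul_const (ENNReal.tendsto_ofReal hexp)
      (Or.inr (ENNReal.ofNat_ne_top : (2 : ℝ≥0∞) ≠ ⊤))
    simpa using this
  refine le_antisymm (ge_of_tendsto' hlim fun n => ?_) zero_le
  refine (measure_mono (Set.iInter_subset _ n)).trans ((nu_avoid_le n φ hφ hr).trans ?_)
  gcongr
  rw [Finset.mul_sum, ← Finset.sum_neg_distrib, Real.exp_sum]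
  refine Finset.prod_le_prod (fun i _ => ?_) fun i _ => ?_
  · have := hφ i
    rw [sub_nonneg, div_le_one (by linarith)]
    linarith
  · have := Real.add_one_le_exp (-(1 / 2 * (1 / φ i)))
    have e : 1 / (2 * φ i) = 1 / 2 * (1 / φ i) := by ring
    rw [e]
    linarith

/-- The mass of `{a_{n+1} ≥ c}` is `O(1/c)`, uniformly in `n`. -/
lemma nu_large_le (n : ℕ) {c : ℝ} (hc : 1 < c) {r : ℝ} (hr : r ∈ Set.Icc (0 : ℝ) 1) :
    nu r {x | Irrational x ∧ c ≤ (cfA (n + 1) x : ℝ)} ≤ ENNReal.ofReal (2 * (1 / c)) := by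
  have hS : MeasurableSet {x : ℝ | c ≤ (cfA 1 x : ℝ)} :=
    measurable_cfA 1 (MeasurableSet.of_discrete (s := {k : ℕ | c ≤ (k : ℝ)}))
  have hbase : ∀ s ∈ Set.Icc (0 : ℝ) 1,
      nu s {x : ℝ | c ≤ (cfA 1 x : ℝ)} ≤ ENNReal.ofReal (2 * (1 / c)) := by
    intro s hs
    refine (nu_le_two_mul hs hS).trans ?_
    rw [ENNReal.ofReal_mul zero_le_two, ENNReal.ofReal_ofNat]
    gcongr
    calc volume ({x : ℝ | c ≤ (cfA 1 x : ℝ)} ∩ Set.Ioo 0 1) ≤ volume (Set.Icc 0 (1 / c)) := by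
          refine measure_mono ?_
          rintro x ⟨hx, hx0, -⟩
          refine ⟨hx0.le, ?_⟩
          have h1 : (cfA 1 x : ℝ) ≤ 1 / x := by
            simpa [cfA] using Nat.floor_le (show 0 ≤ 1 / x by positivity)
          have h2 : c ≤ 1 / x := le_trans hx h1
          rw [le_div_iff₀ hx0] at h2
          rw [le_div_iff₀ (by linarith)]
          linarith
      _ = ENNReal.ofReal (1 / c) := by rw [Real.volume_Icc, sub_zero]
  refine (measure_mono ?_).trans (nu_iterate_le hS hbase n hr)
  rintro x ⟨hx, hlt⟩
  refine ⟨hx, ?_⟩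
  have := cfA_iterate n 0 x
  simp only [zero_add, add_zero] at this
  simpa only [Set.mem_ofPred_eq, this] using hlt

theorem borel_bernstein (Φ : ℕ → ℝ) (hΦ1 : ∀ n, 1 < Φ n) :
    (Summable (fun n => 1 / Φ n) → volume (E1 Φ) = 0) ∧
    (¬ Summable (fun n => 1 / Φ n) → volume (E1 Φ) = 1) := by
  have h01 : (0 : ℝ) ∈ Set.Icc (0 : ℝ) 1 := ⟨le_rfl, zero_le_one⟩
  constructor
  · intro hs
    have hs' : Summable fun n => 2 * (1 / Φ (n + 1)) :=
      ((summable_nat_add_iff 1).2 hs).mul_left 2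
    have hfin : ∑' n, nu 0 {x | Irrational x ∧ Φ (n + 1) ≤ (cfA (n + 1) x : ℝ)} ≠ ⊤ :=
      ne_top_of_le_ne_top hs'.tsum_ofReal_ne_top
        (ENNReal.tsum_le_tsum fun n => nu_large_le n (hΦ1 (n + 1)) h01)
    have h := measure_setOfPred_frequently_eq_zero hfin
    rw [nu_zero, Measure.restrict_apply' measurableSet_Ioo] at h
    refine measure_mono_null ?_ h
    rintro x ⟨hx01, hx, hfreq⟩
    refine ⟨?_, lt_of_le_of_ne hx01.1 hx.ne_zero.symm, hx01.2⟩
    simp only [Set.mem_ofPred_eq, frequently_atTop] at hfreq ⊢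
    intro m
    obtain ⟨n, hn, hle⟩ := hfreq (m + 1)
    obtain ⟨k, rfl⟩ : ∃ k, n = k + 1 := ⟨n - 1, by omega⟩
    exact ⟨k, by omega, hx, hle⟩
  · intro hdiv
    have hnull : ∀ m, nu 0 {x | Irrational x ∧
        gaussMap^[m] x ∈ ⋂ n, avoid (fun i => Φ (m + i + 1)) n} = 0 := by
      intro m
      refine le_antisymm (nu_iterate_le
        (MeasurableSet.iInter fun n => measurableSet_avoid _ n) (fun s hs => ?_) m h01) zero_le
      refine (nu_iInter_avoid _ (fun i => hΦ1 _) (fun h => hdiv ?_) hs).le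
      refine (summable_nat_add_iff (m + 1)).1 (h.congr fun i => ?_)
      congr 2
      omega
    have hirr : ∀ (x : ℝ), Irrational x → ∀ m, Irrational (gaussMap^[m] x) := by
      intro x hx m
      induction m with
      | zero => exact hx
      | succ m ih => rw [Function.iterate_succ_apply']; exact irrational_gaussMap ih
    have hQ : volume {x : ℝ | ¬ Irrational x} = 0 := by
      have : {x : ℝ | ¬ Irrational x} = Set.range ((↑) : ℚ → ℝ) := by
        ext x; simp [Irrational]
      rw [this]
      exact (Set.countable_range _).measure_zero _
    have hcompl : volume (Set.Ioo (0 : ℝ) 1 \ E1 Φ) = 0 := by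
      have hU := measure_iUnion_null hnull
      rw [nu_zero, Measure.restrict_apply' measurableSet_Ioo] at hU
      refine measure_mono_null ?_ (measure_union_null hQ hU)
      rintro x ⟨hx01, hxE⟩
      by_cases hx : Irrational x
      · right
        refine ⟨?_, hx01⟩
        have hev : ∀ᶠ n in atTop, (cfA n x : ℝ) < Φ n := by
          by_contra hcon
          refine hxE ⟨⟨hx01.1.le, hx01.2⟩, hx, ?_⟩
          intro h
          exact hcon (h.mono fun n hn => not_le.1 hn)
        obtain ⟨m, hm⟩ := eventually_atTop.1 hev
        refine Set.mem_iUnion.2 ⟨m, hx, Set.mem_iInter.2 fun n => ⟨hirr x hx m, fun i _ => ?_⟩⟩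
        rw [cfA_iterate]
        exact hm _ (by omega)
      · exact Or.inl hx
    refine le_antisymm ?_ ?_
    · calc volume (E1 Φ) ≤ volume (Set.Ico (0 : ℝ) 1) := measure_mono fun x hx => hx.1
        _ = 1 := by simp
    · calc (1 : ℝ≥0∞) = volume (Set.Ioo (0 : ℝ) 1) := by simp
        _ ≤ volume (E1 Φ ∪ Set.Ioo (0 : ℝ) 1 \ E1 Φ) := measure_mono fun x hx => by
            by_cases h : x ∈ E1 Φ
            · exact Or.inl h
            · exact Or.inr ⟨hx, h⟩
        _ ≤ volume (E1 Φ) + volume (Set.Ioo (0 : ℝ) 1 \ E1 Φ) := measure_union_le _ _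
        _ = volume (E1 Φ) := by rw [hcompl, add_zero]
end

section
/- (Wang–Wu, case B = 1) Let Φ : ℕ → ℝ⁺ be an arbitrary positive function with liminf_{n→∞} (log Φ(n))/n = 0. Then the Hausdorff dimension of E_1(Φ) = { x ∈ [0,1) : a_n(x) ≥ Φ(n) for infinitely many n ∈ ℕ } equals 1. -/
/-!
The upper bound is trivial. For the lower bound fix `η > 0` and a small `ε > 0`. By the hypothesis,
`Φ n ≤ e^{ε n}` for infinitely many `n`.

Let `F` be the set of irrational `x ∈ (0,1)` whose digits satisfy `a_{n+1}(x) ≤ K e^{ε n}` for all `n`.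
Within each cylinder the proportion of points whose next digit exceeds `M` is at most `4 / M`, so for
`K` large `F` has positive Lebesgue measure (`exists_slowDigits`), hence dimension `1`.

Choose a very sparse infinite set `S` of positions `n` with `Φ n ≤ e^{ε n}` (`exists_positions`), and
let `G x` be the number whose expansion is that of `x` with an extra digit about `Φ n` inserted at
every position `n ∈ S`. Such a number exists because every digit sequence is realized
(`exists_cfDig`), and `G` maps `F` into `E1 Φ`.

The inverse of `G` on `G(F)` is Hölder of exponent `1 / (1 + η)` (`insert_separation`): if `x, y`
share exactly `n` digits, then `|x - y|` is at most `1 / R`, where `R` is comparable with the square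
of the continuant `q_n` of these digits and `R ≥ 2^{n-1}`. Inserting a digit `d` multiplies
continuants by at most `2 (d + 1)` (`cfDen_delete`), and by sparseness all insertions together cost
at most `e^{O(ε n)}`; the first tails of `G x` and `G y` that differ in their leading digit are at
distance at least `e^{-O(ε n)}`. Hence `|G x - G y| ≥ e^{-O(ε n)} / R ≥ c |x - y|^{1 + η}`.
Consequently `1 = dimH F ≤ (1 + η) dimH (E1 Φ)` (`one_le_mul_dimH`), and `η → 0`.
-/

open Filter Topology MeasureTheory
open scoped ENNReal NNReal

/-! ### Inverse branches of the Gauss map and their denominators -/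

/-- The inverse branch `t ↦ [a₁, …, aₙ + t]` of the `n`-th iterate of the Gauss map. -/
noncomputable def cfBranch : List ℕ → ℝ → ℝ
  | [], t => t
  | a :: l, t => 1 / (a + cfBranch l t)

/-- The denominator `q_n + q_{n-1} t` of the Möbius map `cfBranch l`, written as the product of the
reciprocals of the successive tails. -/
noncomputable def cfDen : List ℕ → ℝ → ℝ
  | [], _ => 1
  | a :: l, t => (a + cfBranch l t) * cfDen l t

/-- All entries of the list are admissible partial quotients. -/
def PosList (l : List ℕ) : Prop := ∀ a ∈ l, 1 ≤ a

lemma PosList.cons_iff {a : ℕ} {l : List ℕ} : PosList (a :: l) ↔ 1 ≤ a ∧ PosList l := by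
  simp [PosList]

lemma PosList.append_iff {l m : List ℕ} : PosList (l ++ m) ↔ PosList l ∧ PosList m := by
  simp only [PosList, List.mem_append]
  exact ⟨fun h => ⟨fun a ha => h a (Or.inl ha), fun a ha => h a (Or.inr ha)⟩,
    fun h a ha => ha.elim (h.1 a) (h.2 a)⟩

lemma cfBranch_append (l m : List ℕ) (t : ℝ) :
    cfBranch (l ++ m) t = cfBranch l (cfBranch m t) := by
  induction l with
  | nil => rfl
  | cons a l ih => simp [cfBranch, ih]

lemma cfDen_append (l m : List ℕ) (t : ℝ) :
    cfDen (l ++ m) t = cfDen l (cfBranch m t) * cfDen m t := by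
  induction l with
  | nil => simp [cfDen]
  | cons a l ih => simp [cfDen, ih, cfBranch_append, mul_assoc]

lemma cfBranch_mem_Icc {l : List ℕ} (hl : PosList l) {t : ℝ} (ht : t ∈ Set.Icc (0 : ℝ) 1) :
    cfBranch l t ∈ Set.Icc (0 : ℝ) 1 := by
  induction l with
  | nil => exact ht
  | cons a l ih =>
    obtain ⟨ha, hl⟩ := PosList.cons_iff.1 hl
    obtain ⟨h0, h1⟩ := ih hl
    have ha' : (1 : ℝ) ≤ a := by exact_mod_cast ha
    refine ⟨by simp only [cfBranch]; positivity, ?_⟩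
    simp only [cfBranch]
    rw [div_le_one (by linarith)]
    linarith

lemma cfBranch_mem_Ioo {l : List ℕ} (hl : PosList l) {t : ℝ} (ht : t ∈ Set.Ioo (0 : ℝ) 1) :
    cfBranch l t ∈ Set.Ioo (0 : ℝ) 1 := by
  induction l with
  | nil => exact ht
  | cons a l ih =>
    obtain ⟨ha, hl⟩ := PosList.cons_iff.1 hl
    obtain ⟨h0, h1⟩ := ih hl
    have ha' : (1 : ℝ) ≤ a := by exact_mod_cast ha
    refine ⟨by simp only [cfBranch]; positivity, ?_⟩
    simp only [cfBranch]
    rw [div_lt_one (by linarith)]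
    linarith

lemma one_le_cfDen {l : List ℕ} (hl : PosList l) {t : ℝ} (ht : t ∈ Set.Icc (0 : ℝ) 1) :
    1 ≤ cfDen l t := by
  induction l with
  | nil => simp [cfDen]
  | cons a l ih =>
    obtain ⟨ha, hl⟩ := PosList.cons_iff.1 hl
    obtain ⟨h0, h1⟩ := cfBranch_mem_Icc hl ht
    have ha' : (1 : ℝ) ≤ a := by exact_mod_cast ha
    have := ih hl
    simp only [cfDen]
    nlinarith

/-- The exact distance between two points with the same initial digits, in terms of their tails;
it replaces the usual estimates of lengths of cylinders. -/
lemma abs_cfBranch_sub {l : List ℕ} (hl : PosList l) {t s : ℝ} (ht : t ∈ Set.Icc (0 : ℝ) 1)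
    (hs : s ∈ Set.Icc (0 : ℝ) 1) :
    |cfBranch l t - cfBranch l s| * (cfDen l t * cfDen l s) = |t - s| := by
  induction l with
  | nil => simp [cfBranch, cfDen]
  | cons a l ih =>
    obtain ⟨ha, hl⟩ := PosList.cons_iff.1 hl
    obtain ⟨h0, h1⟩ := cfBranch_mem_Icc hl ht
    obtain ⟨h0', h1'⟩ := cfBranch_mem_Icc hl hs
    have ha' : (1 : ℝ) ≤ a := by exact_mod_cast ha
    have hp : (0 : ℝ) < a + cfBranch l t := by linarith
    have hp' : (0 : ℝ) < a + cfBranch l s := by linarith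
    have key : |1 / (a + cfBranch l t) - 1 / (a + cfBranch l s)|
        * ((a + cfBranch l t) * (a + cfBranch l s)) = |cfBranch l t - cfBranch l s| := by
      rw [div_sub_div _ _ hp.ne' hp'.ne', abs_div, abs_of_pos (mul_pos hp hp'),
        div_mul_cancel₀ _ (mul_pos hp hp').ne', abs_sub_comm]
      congr 1
      ring
    rw [← ih hl, ← key]
    simp only [cfBranch, cfDen]
    ring

/-- Both the denominator and the numerator of the branch are affine in `t`; the coefficient
inequalities are those of `q_{n-1} ≤ q_n` and `q_{n-1} + p_{n-1} ≤ q_n + p_n`. -/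
lemma cfDen_affine {l : List ℕ} (hl : PosList l) :
    ∃ A B A' B' : ℝ, 0 ≤ B ∧ 0 ≤ B' ∧ B ≤ A ∧ B + B' ≤ A + A' ∧
      ∀ t ∈ Set.Icc (0 : ℝ) 1,
        cfDen l t = A + B * t ∧ cfBranch l t * cfDen l t = A' + B' * t := by
  induction l with
  | nil => exact ⟨1, 0, 0, 1, by simp [cfDen, cfBranch]⟩
  | cons a l ih =>
    obtain ⟨ha, hl⟩ := PosList.cons_iff.1 hl
    obtain ⟨A, B, A', B', hB, hB', hBA, hsum, h⟩ := ih hl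
    have ha' : (1 : ℝ) ≤ a := by exact_mod_cast ha
    refine ⟨a * A + A', a * B + B', A, B, by positivity, hB, by nlinarith, by nlinarith, ?_⟩
    intro t ht
    obtain ⟨h0, h1⟩ := cfBranch_mem_Icc hl ht
    obtain ⟨e1, e2⟩ := h t ht
    have hp : (0 : ℝ) < a + cfBranch l t := by linarith
    simp only [cfDen, cfBranch]
    constructor
    · rw [add_mul, e2, e1]; ring
    · rw [← mul_assoc, one_div, inv_mul_cancel₀ hp.ne', one_mul, e1]

/-- Bounded distortion. -/
lemma cfDen_le_two_mul {l : List ℕ} (hl : PosList l) {t s : ℝ} (ht : t ∈ Set.Icc (0 : ℝ) 1)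
    (hs : s ∈ Set.Icc (0 : ℝ) 1) : cfDen l t ≤ 2 * cfDen l s := by
  obtain ⟨A, B, A', B', hB, hB', hBA, -, h⟩ := cfDen_affine hl
  rw [(h t ht).1, (h s hs).1]
  nlinarith [mul_le_of_le_one_right hB ht.2, mul_nonneg hB hs.1]

/-- Deleting one digit `d` shrinks the denominator by a factor of at most `2 (d + 1)`. -/
lemma cfDen_delete {l m : List ℕ} {d : ℕ} (hl : PosList l) (hd : 1 ≤ d) (hm : PosList m) {t : ℝ}
    (ht : t ∈ Set.Icc (0 : ℝ) 1) :
    cfDen (l ++ d :: m) t ≤ 2 * (d + 1) * cfDen (l ++ m) t := by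
  rw [cfDen_append, cfDen_append]
  have hm' := cfBranch_mem_Icc hm ht
  have hdm := cfBranch_mem_Icc (PosList.cons_iff.2 ⟨hd, hm⟩) ht
  have h1 := cfDen_le_two_mul hl hdm hm'
  have h2 := one_le_cfDen hm ht
  have h3 := one_le_cfDen hl hm'
  have e : cfDen (d :: m) t = (d + cfBranch m t) * cfDen m t := rfl
  rw [e]
  have h4 : (d + cfBranch m t) * cfDen m t ≤ (d + 1) * cfDen m t := by
    gcongr
    exact hm'.2
  have h5 : 0 ≤ (d + cfBranch m t) * cfDen m t :=
    mul_nonneg (add_nonneg (Nat.cast_nonneg d) hm'.1) (by linarith)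
  calc _ ≤ (2 * cfDen l (cfBranch m t)) * ((d + 1) * cfDen m t) := by gcongr
    _ = _ := by ring

/-- Exponential growth of the denominators, in the form `2 ^ n ≤ 2 q_n²`. -/
lemma two_pow_le_cfDen {t s : ℝ} (ht : t ∈ Set.Icc (0 : ℝ) 1)
    (hs : s ∈ Set.Icc (0 : ℝ) 1) :
    ∀ l : List ℕ, PosList l → (2 : ℝ) ^ l.length ≤ 2 * (cfDen l t * cfDen l s)
  | [], _ => by simp [cfDen]
  | [a], hl => by
    have h1 := one_le_cfDen hl ht
    have h2 := one_le_cfDen hl hs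
    simp only [List.length_singleton, pow_one]
    nlinarith
  | a :: b :: l, hl => by
    obtain ⟨ha, hl⟩ := PosList.cons_iff.1 hl
    obtain ⟨hb, hl⟩ := PosList.cons_iff.1 hl
    have ha' : (1 : ℝ) ≤ a := by exact_mod_cast ha
    have hb' : (1 : ℝ) ≤ b := by exact_mod_cast hb
    have key : ∀ r ∈ Set.Icc (0 : ℝ) 1, 2 * cfDen l r ≤ cfDen (a :: b :: l) r := by
      intro r hr
      obtain ⟨h0, h1⟩ := cfBranch_mem_Icc hl hr
      have h2 := one_le_cfDen hl hr
      have hp : (0 : ℝ) < b + cfBranch l r := by linarith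
      have e : cfDen (a :: b :: l) r = (a * (b + cfBranch l r) + 1) * cfDen l r := by
        simp only [cfDen, cfBranch]
        field_simp
      rw [e]
      gcongr
      nlinarith
    have ih := two_pow_le_cfDen ht hs l hl
    have h1 := one_le_cfDen hl ht
    have h2 := one_le_cfDen hl hs
    have h3 : (2 * cfDen l t) * (2 * cfDen l s)
        ≤ cfDen (a :: b :: l) t * cfDen (a :: b :: l) s := by
      gcongr
      · linarith [key t ht]
      · exact key t ht
      · exact key s hs
    simp only [List.length_cons, pow_succ]
    nlinarith

/-! ### Digits of a real number -/

/-- The partial quotients, indexed from `0`. -/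
noncomputable def cfDig (x : ℝ) (i : ℕ) : ℕ := ⌊1 / gaussMap^[i] x⌋₊

/-- The first `n` terms of a sequence. -/
def pref (a : ℕ → ℕ) (n : ℕ) : List ℕ := (List.range n).map a

lemma pref_succ (a : ℕ → ℕ) (n : ℕ) : pref a (n + 1) = pref a n ++ [a n] := by
  simp [pref, List.range_succ]

lemma pref_length (a : ℕ → ℕ) (n : ℕ) : (pref a n).length = n := by simp [pref]

lemma pref_pos {a : ℕ → ℕ} (ha : ∀ i, 1 ≤ a i) (n : ℕ) : PosList (pref a n) := by
  intro b hb
  simp only [pref, List.mem_map] at hb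
  obtain ⟨i, -, rfl⟩ := hb
  exact ha i

lemma pref_congr {a b : ℕ → ℕ} {n : ℕ} (h : ∀ i < n, a i = b i) : pref a n = pref b n := by
  simp only [pref]
  apply List.map_congr_left
  intro i hi
  exact h i (List.mem_range.1 hi)

/-- The irrational points of the open unit interval. -/
def irrUnit : Set ℝ := {x | x ∈ Set.Ioo (0 : ℝ) 1 ∧ Irrational x}

lemma gaussMap_irrUnit {x : ℝ} (hx : x ∈ irrUnit) : gaussMap x ∈ irrUnit := by
  obtain ⟨⟨h0, h1⟩, hirr⟩ := hx
  have e : gaussMap x = 1 / x - ⌊1 / x⌋ := by simp [gaussMap, h0.ne']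
  have hi : Irrational (gaussMap x) := by
    rw [e, one_div]
    exact (irrational_inv_iff.2 hirr).sub_intCast _
  refine ⟨⟨lt_of_le_of_ne ?_ (Ne.symm hi.ne_zero), ?_⟩, hi⟩
  · rw [e]; exact Int.fract_nonneg _
  · rw [e]; exact Int.fract_lt_one _

lemma iterate_irrUnit {x : ℝ} (hx : x ∈ irrUnit) (n : ℕ) : gaussMap^[n] x ∈ irrUnit := by
  induction n with
  | zero => exact hx
  | succ n ih => rw [Function.iterate_succ_apply']; exact gaussMap_irrUnit ih

lemma one_le_cfDig {x : ℝ} (hx : x ∈ irrUnit) (i : ℕ) : 1 ≤ cfDig x i := by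
  obtain ⟨⟨h0, h1⟩, -⟩ := iterate_irrUnit hx i
  rw [cfDig, Nat.one_le_floor_iff, le_div_iff₀ h0]
  linarith

lemma iterate_eq {x : ℝ} (hx : x ∈ irrUnit) (i : ℕ) :
    gaussMap^[i] x = 1 / (cfDig x i + gaussMap^[i + 1] x) := by
  obtain ⟨⟨h0, h1⟩, -⟩ := iterate_irrUnit hx i
  have e : gaussMap^[i + 1] x = 1 / gaussMap^[i] x - ⌊1 / gaussMap^[i] x⌋ := by
    rw [Function.iterate_succ_apply']
    simp [gaussMap, h0.ne']
  have e2 : ((cfDig x i : ℕ) : ℝ) = (⌊1 / gaussMap^[i] x⌋ : ℝ) := by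
    rw [cfDig]
    exact natCast_floor_eq_intCast_floor (by positivity)
  rw [e, e2]
  simp

/-- Expansion of `x` up to its `n`-th tail. -/
lemma eq_cfBranch {x : ℝ} (hx : x ∈ irrUnit) (n : ℕ) :
    x = cfBranch (pref (cfDig x) n) (gaussMap^[n] x) := by
  induction n with
  | zero => rfl
  | succ n ih =>
    rw [pref_succ, cfBranch_append]
    simp only [cfBranch]
    rw [← iterate_eq hx n, ← ih]

lemma gaussMap_inv_add {a : ℕ} {t : ℝ} (ht : t ∈ Set.Ioo (0 : ℝ) 1) :
    gaussMap (1 / (a + t)) = t := by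
  have hp : (0 : ℝ) < a + t := by have := ht.1; positivity
  have hf : ⌊(a : ℝ) + t⌋ = a := by
    rw [Int.floor_eq_iff]
    exact ⟨by simpa using ht.1.le, by simpa using ht.2⟩
  simp [gaussMap, hp.ne', hf]

lemma exists_iterate_eq_zero (q : ℕ) :
    ∀ p : ℕ, p < q → ∃ n, gaussMap^[n] ((p : ℝ) / q) = 0 := by
  induction q using Nat.strong_induction_on with
  | _ q ih =>
    intro p hpq
    rcases Nat.eq_zero_or_pos p with rfl | hp
    · exact ⟨0, by simp⟩
    · obtain ⟨n, hn⟩ := ih p hpq (q % p) (Nat.mod_lt _ hp)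
      refine ⟨n + 1, ?_⟩
      rw [Function.iterate_succ_apply]
      have e : gaussMap ((p : ℝ) / q) = ((q % p : ℕ) : ℝ) / p := by
        have hp' : (p : ℝ) ≠ 0 := by positivity
        have hq' : (q : ℝ) ≠ 0 := by have : 0 < q := by omega
                                     positivity
        have hf : ⌊(q : ℝ) / p⌋ = ((q / p : ℕ) : ℤ) := by
          rw [← Int.natCast_floor_eq_floor (by positivity), Nat.floor_div_eq_div]
        rw [gaussMap, if_neg (by positivity), one_div_div, hf]
        have := Nat.div_add_mod q p
        have h2 : (q : ℝ) = p * (q / p : ℕ) + (q % p : ℕ) := by exact_mod_cast this.symm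
        rw [eq_div_iff hp', sub_mul, div_mul_cancel₀ _ hp']
        rw [Int.cast_natCast]
        linarith
      rw [e, hn]

/-- A number whose Gauss orbit avoids `0` is irrational, by the Euclidean algorithm. -/
lemma irrational_of_iterate_ne_zero {x : ℝ} (hx : x ∈ Set.Ioo (0 : ℝ) 1)
    (h : ∀ n, gaussMap^[n] x ≠ 0) : Irrational x := by
  rintro ⟨r, rfl⟩
  obtain ⟨h0, h1⟩ := hx
  have hr0 : 0 < r := by exact_mod_cast h0
  have hr1 : r < 1 := by exact_mod_cast h1
  have hn : 0 < r.num := Rat.num_pos.2 hr0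
  have hlt : r.num < r.den := Rat.num_lt_denom_iff.2 hr1
  obtain ⟨n, hn'⟩ := exists_iterate_eq_zero r.den r.num.toNat (by omega)
  apply h n
  rw [← hn']
  congr 1
  rw [Rat.cast_def]
  congr 1
  have : ((r.num.toNat : ℤ) : ℝ) = (r.num : ℝ) := by rw [Int.toNat_of_nonneg hn.le]
  exact_mod_cast this.symm

lemma cfBranch_injOn {l : List ℕ} (hl : PosList l) :
    Set.InjOn (cfBranch l) (Set.Icc (0 : ℝ) 1) := by
  intro t ht s hs h
  have := abs_cfBranch_sub hl ht hs
  rw [h, sub_self, abs_zero, zero_mul] at this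
  exact sub_eq_zero.1 (abs_eq_zero.1 this.symm)

lemma cfBranch_continuousOn {l : List ℕ} (hl : PosList l) :
    ContinuousOn (cfBranch l) (Set.Icc (0 : ℝ) 1) := by
  have : LipschitzOnWith 1 (cfBranch l) (Set.Icc (0 : ℝ) 1) := by
    apply LipschitzOnWith.of_dist_le_mul
    intro t ht s hs
    rw [Real.dist_eq, Real.dist_eq, ← abs_cfBranch_sub hl ht hs, NNReal.coe_one, one_mul]
    have h1 := one_le_cfDen hl ht
    have h2 := one_le_cfDen hl hs
    exact le_mul_of_one_le_right (abs_nonneg _) (by nlinarith)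
  exact this.continuousOn

/-- Every sequence of positive integers is the digit sequence of an irrational number, found in the
intersection of the nested closed cylinders. -/
lemma exists_cfDig {b : ℕ → ℕ} (hb : ∀ i, 1 ≤ b i) :
    ∃ x ∈ irrUnit, ∀ i, cfDig x i = b i := by
  have hne : (⋂ n, cfBranch (pref b n) '' Set.Icc (0 : ℝ) 1).Nonempty := by
    apply IsCompact.nonempty_iInter_of_sequence_nonempty_isCompact_isClosed
    · intro n
      rintro _ ⟨t, ht, rfl⟩
      rw [pref_succ, cfBranch_append]
      refine ⟨_, cfBranch_mem_Icc (l := [b n]) ?_ ht, rfl⟩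
      simpa [PosList] using hb n
    · intro n
      exact (Set.nonempty_Icc.2 zero_le_one).image _
    · exact isCompact_Icc.image_of_continuousOn (cfBranch_continuousOn (pref_pos hb 0))
    · intro n
      exact (isCompact_Icc.image_of_continuousOn
        (cfBranch_continuousOn (pref_pos hb n))).isClosed
  obtain ⟨x, hx⟩ := hne
  rw [Set.mem_iInter] at hx
  choose t ht htx using hx
  have hrec : ∀ n, t n = 1 / (b n + t (n + 1)) := by
    intro n
    have h1 : cfBranch (pref b n) (t n) = cfBranch (pref b n) (cfBranch [b n] (t (n + 1))) := by
      rw [htx n, ← cfBranch_append, ← pref_succ, htx (n + 1)]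
    have h2 : PosList [b n] := by simpa [PosList] using hb n
    exact cfBranch_injOn (pref_pos hb n) (ht n) (cfBranch_mem_Icc h2 (ht (n + 1))) h1
  have hb' : ∀ i, (1 : ℝ) ≤ b i := fun i => by exact_mod_cast hb i
  have hpos : ∀ n, 0 < t n := by
    intro n
    rw [hrec n]
    have := (ht (n + 1)).1
    have := hb' n
    positivity
  have hlt : ∀ n, t n < 1 := by
    intro n
    have := hpos (n + 1)
    have := hb' n
    rw [hrec n, div_lt_one (by linarith)]
    linarith
  have hx0 : t 0 = x := htx 0
  have hiter : ∀ n, gaussMap^[n] x = t n := by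
    intro n
    induction n with
    | zero => exact hx0.symm
    | succ n ih =>
      rw [Function.iterate_succ_apply', ih, hrec n, gaussMap_inv_add ⟨hpos _, hlt _⟩]
  have hxI : x ∈ Set.Ioo (0 : ℝ) 1 := by rw [← hx0]; exact ⟨hpos 0, hlt 0⟩
  refine ⟨x, ⟨hxI, irrational_of_iterate_ne_zero hxI fun n => ?_⟩, fun i => ?_⟩
  · rw [hiter]; exact (hpos n).ne'
  · rw [cfDig, hiter, hrec i, one_div_one_div, Nat.floor_eq_iff]
    · exact ⟨by linarith [hpos (i + 1)], by linarith [hlt (i + 1)]⟩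
    · have := hb' i
      linarith [hpos (i + 1)]

/-! ### A set of positive measure with slowly growing digits -/

/-- The irrational points whose `n`-th digit is at most `M n` for every `n`. -/
def slowDigits (M : ℕ → ℝ) : Set ℝ := {x | x ∈ irrUnit ∧ ∀ n, (cfDig x n : ℝ) ≤ M n}

/-- The words of length `n` in the positive integers. -/
def PosWord (n : ℕ) : Type := {l : List ℕ // PosList l ∧ l.length = n}

instance (n : ℕ) : Countable (PosWord n) :=
  inferInstanceAs (Countable {l : List ℕ // PosList l ∧ l.length = n})

/-- The open cylinder of a word. -/
noncomputable def cyl {n : ℕ} (w : PosWord n) : Set ℝ :=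
  Set.uIoo (cfBranch w.1 0) (cfBranch w.1 1)

lemma cyl_subset {n : ℕ} (w : PosWord n) : cyl w ⊆ cfBranch w.1 '' Set.Ioo (0 : ℝ) 1 := by
  intro y hy
  have hc : ContinuousOn (cfBranch w.1) (Set.uIcc (0 : ℝ) 1) := by
    rw [Set.uIcc_of_le zero_le_one]; exact cfBranch_continuousOn w.2.1
  obtain ⟨t, ht, rfl⟩ := intermediate_value_uIcc hc (Set.uIoo_subset_uIcc_self hy)
  rw [Set.uIcc_of_le zero_le_one] at ht
  refine ⟨t, ⟨lt_of_le_of_ne ht.1 ?_, lt_of_le_of_ne ht.2 ?_⟩, rfl⟩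
  · rintro rfl
    simp only [cyl, Set.uIoo, Set.mem_Ioo, not_le, lt_sup_iff, lt_self_iff_false, inf_lt_left,
      false_or] at hy
    exact lt_asymm hy.1 hy.2
  · rintro rfl
    simp only [cyl, Set.uIoo, Set.mem_Ioo, inf_lt_right, not_le, lt_sup_iff, lt_self_iff_false,
      or_false] at hy
    exact lt_asymm hy.1 hy.2

lemma cfBranch_word_inj {t s : ℝ} (ht : t ∈ Set.Ioo (0 : ℝ) 1) (hs : s ∈ Set.Ioo (0 : ℝ) 1) :
    ∀ l m : List ℕ, PosList l → PosList m → l.length = m.length →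
      cfBranch l t = cfBranch m s → l = m
  | [], [], _, _, _, _ => rfl
  | [], _ :: _, _, _, h, _ => by simp at h
  | _ :: _, [], _, _, h, _ => by simp at h
  | a :: l, b :: m, hl, hm, hlen, h => by
    obtain ⟨ha, hl⟩ := PosList.cons_iff.1 hl
    obtain ⟨hb, hm'⟩ := PosList.cons_iff.1 hm
    have h1 := cfBranch_mem_Ioo hl ht
    have h2 := cfBranch_mem_Ioo hm' hs
    have h' : (a : ℝ) + cfBranch l t = b + cfBranch m s := by
      simpa [cfBranch] using h
    have hab : a = b := by
      have i1 : (a : ℝ) < b + 1 := by linarith [h1.1, h2.2]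
      have i2 : (b : ℝ) < a + 1 := by linarith [h1.2, h2.1]
      have i1' : a < b + 1 := by exact_mod_cast i1
      have i2' : b < a + 1 := by exact_mod_cast i2
      omega
    subst hab
    have hlen' : l.length = m.length := by simpa using hlen
    rw [cfBranch_word_inj ht hs l m hl hm' hlen' (by linarith)]

lemma cyl_disjoint (n : ℕ) : Pairwise (Function.onFun Disjoint (cyl (n := n))) := by
  intro w v hwv
  rw [Function.onFun, Set.disjoint_left]
  intro y hy hy'
  obtain ⟨t, ht, rfl⟩ := cyl_subset w hy
  obtain ⟨s, hs, h⟩ := cyl_subset v hy'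
  exact hwv (Subtype.ext (cfBranch_word_inj ht hs _ _ w.2.1 v.2.1 (w.2.2.trans v.2.2.symm) h.symm))

lemma tsum_volume_cyl_le (n : ℕ) : ∑' w : PosWord n, volume (cyl w) ≤ 1 := by
  rw [← measure_iUnion (cyl_disjoint n) fun w => isOpen_Ioo.measurableSet]
  calc volume (⋃ w : PosWord n, cyl w) ≤ volume (Set.Ioo (0 : ℝ) 1) := by
        apply measure_mono
        apply Set.iUnion_subset
        intro w y hy
        obtain ⟨t, ht, rfl⟩ := cyl_subset w hy
        exact cfBranch_mem_Ioo w.2.1 ht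
    _ = 1 := by simp

/-- Within each cylinder of order `n`, the points with next tail in `[0, c]` have relative measure at
most `4 c`. -/
lemma volume_cfBranch_image_le {n : ℕ} (w : PosWord n) {c : ℝ} (hc0 : 0 ≤ c) (hc1 : c ≤ 1) :
    volume (cfBranch w.1 '' Set.Icc 0 c) ≤ ENNReal.ofReal (4 * c) * volume (cyl w) := by
  have h0 : (0 : ℝ) ∈ Set.Icc (0 : ℝ) 1 := by simp
  have h1 : (1 : ℝ) ∈ Set.Icc (0 : ℝ) 1 := by simp
  rw [cyl, Real.volume_uIoo, ← ENNReal.ofReal_mul (by positivity)]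
  refine (Real.volume_le_diam _).trans (Metric.ediam_le ?_)
  rintro _ ⟨t, ht, rfl⟩ _ ⟨s, hs, rfl⟩
  rw [edist_dist, Real.dist_eq]
  apply ENNReal.ofReal_le_ofReal
  have ht' : t ∈ Set.Icc (0 : ℝ) 1 := ⟨ht.1, ht.2.trans hc1⟩
  have hs' : s ∈ Set.Icc (0 : ℝ) 1 := ⟨hs.1, hs.2.trans hc1⟩
  have e1 := abs_cfBranch_sub w.2.1 ht' hs'
  have e2 := abs_cfBranch_sub w.2.1 h1 h0
  have d1 := cfDen_le_two_mul w.2.1 h1 ht'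
  have d2 := cfDen_le_two_mul w.2.1 h0 hs'
  have p1 := one_le_cfDen w.2.1 ht'
  have p2 := one_le_cfDen w.2.1 hs'
  have p3 := one_le_cfDen w.2.1 h1
  have p4 := one_le_cfDen w.2.1 h0
  have hts : |t - s| ≤ c := by
    rw [abs_le]; constructor <;> linarith [ht.1, ht.2, hs.1, hs.2]
  have hprod : cfDen w.1 1 * cfDen w.1 0 ≤ 4 * (cfDen w.1 t * cfDen w.1 s) := by
    calc _ ≤ (2 * cfDen w.1 t) * (2 * cfDen w.1 s) := by gcongr
      _ = _ := by ring
  have e3 : |cfBranch w.1 1 - cfBranch w.1 0| = 1 / (cfDen w.1 1 * cfDen w.1 0) := by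
    rw [eq_div_iff (by positivity), e2]; simp
  have e4 : |cfBranch w.1 t - cfBranch w.1 s| = |t - s| / (cfDen w.1 t * cfDen w.1 s) := by
    rw [eq_div_iff (by positivity), e1]
  rw [e3, e4, mul_one_div, div_le_div_iff₀ (by positivity) (by positivity)]
  calc _ ≤ c * (4 * (cfDen w.1 t * cfDen w.1 s)) := by gcongr
    _ = _ := by ring

lemma volume_large_digit_le (n : ℕ) {M : ℝ} (hM : 1 ≤ M) :
    volume {x | x ∈ irrUnit ∧ M < cfDig x n} ≤ ENNReal.ofReal (4 / M) := by
  have hsub : {x | x ∈ irrUnit ∧ M < cfDig x n} ⊆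
      ⋃ w : PosWord n, cfBranch w.1 '' Set.Icc 0 (1 / M) := by
    rintro x ⟨hx, hM'⟩
    rw [Set.mem_iUnion]
    refine ⟨⟨pref (cfDig x) n, pref_pos (one_le_cfDig hx) n, pref_length _ n⟩,
      gaussMap^[n] x, ⟨(iterate_irrUnit hx n).1.1.le, ?_⟩, (eq_cfBranch hx n).symm⟩
    rw [iterate_eq hx n]
    apply one_div_le_one_div_of_le (by linarith)
    linarith [(iterate_irrUnit hx (n + 1)).1.1]
  have hc : 1 / M ≤ 1 := by rw [div_le_one (by linarith)]; exact hM
  calc _ ≤ volume (⋃ w : PosWord n, cfBranch w.1 '' Set.Icc 0 (1 / M)) := measure_mono hsub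
    _ ≤ ∑' w : PosWord n, volume (cfBranch w.1 '' Set.Icc 0 (1 / M)) := measure_iUnion_le _
    _ ≤ ∑' w : PosWord n, ENNReal.ofReal (4 * (1 / M)) * volume (cyl w) :=
        ENNReal.tsum_le_tsum fun w => volume_cfBranch_image_le w (by positivity) hc
    _ = ENNReal.ofReal (4 * (1 / M)) * ∑' w : PosWord n, volume (cyl w) := ENNReal.tsum_mul_left
    _ ≤ ENNReal.ofReal (4 * (1 / M)) * 1 := by gcongr; exact tsum_volume_cyl_le n
    _ = _ := by rw [mul_one, mul_one_div]

lemma exists_slowDigits {ε : ℝ} (hε : 0 < ε) :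
    ∃ K : ℝ, 1 ≤ K ∧ volume (slowDigits fun n => K * Real.exp (ε * n)) ≠ 0 := by
  set r : ℝ := Real.exp (-ε) with hr
  have hr0 : 0 < r := Real.exp_pos _
  have hr1 : r < 1 := by rw [hr, Real.exp_lt_one_iff]; linarith
  -- the geometric series `∑ 4 rⁿ / K` then has sum `4 / (K (1 - r)) ≤ 1 / 2`
  set K : ℝ := 8 / (1 - r) with hK
  have hK1 : 1 ≤ K := by
    rw [hK, le_div_iff₀ (by linarith)]; linarith
  refine ⟨K, hK1, fun h0 => ?_⟩
  set M : ℕ → ℝ := fun n => K * Real.exp (ε * n) with hM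
  have hM1 : ∀ n, 1 ≤ M n := by
    intro n
    have : 1 ≤ Real.exp (ε * n) := Real.one_le_exp (by positivity)
    simp only [hM]
    nlinarith
  have hMr : ∀ n, 4 / M n = 4 / K * r ^ n := by
    intro n
    have : r ^ n = (Real.exp (ε * n))⁻¹ := by
      rw [hr, ← Real.exp_nat_mul, ← Real.exp_neg]; ring_nf
    simp only [hM]
    rw [this]
    field_simp
  have hcov : Set.Ioo (0 : ℝ) 1 ⊆ slowDigits M ∪ (Set.range ((↑) : ℚ → ℝ) ∪
      ⋃ n, {x | x ∈ irrUnit ∧ M n < cfDig x n}) := by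
    intro x hx
    by_cases hirr : Irrational x
    · by_cases hs : ∀ n, (cfDig x n : ℝ) ≤ M n
      · exact Or.inl ⟨⟨hx, hirr⟩, hs⟩
      · push Not at hs
        obtain ⟨n, hn⟩ := hs
        exact Or.inr (Or.inr (Set.mem_iUnion.2 ⟨n, ⟨hx, hirr⟩, hn⟩))
    · exact Or.inr (Or.inl (by simpa [Irrational] using hirr))
  have hq : volume (Set.range ((↑) : ℚ → ℝ)) = 0 := (Set.countable_range _).measure_zero _
  have hbad : volume (⋃ n, {x | x ∈ irrUnit ∧ M n < cfDig x n}) ≤ ENNReal.ofReal (1 / 2) := by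
    calc _ ≤ ∑' n, volume {x | x ∈ irrUnit ∧ M n < cfDig x n} := measure_iUnion_le _
      _ ≤ ∑' n, ENNReal.ofReal (4 / K * r ^ n) :=
          ENNReal.tsum_le_tsum fun n => by rw [← hMr]; exact volume_large_digit_le n (hM1 n)
      _ = ENNReal.ofReal (∑' n, 4 / K * r ^ n) := by
          rw [ENNReal.ofReal_tsum_of_nonneg]
          · intro n; positivity
          · exact (summable_geometric_of_lt_one hr0.le hr1).mul_left _
      _ = ENNReal.ofReal (1 / 2) := by
          rw [tsum_mul_left, tsum_geometric_of_lt_one hr0.le hr1, hK]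
          congr 1
          have : 1 - r ≠ 0 := by linarith
          field_simp
          norm_num
  have := calc (1 : ℝ≥0∞) = volume (Set.Ioo (0 : ℝ) 1) := by simp
    _ ≤ _ := measure_mono hcov
    _ ≤ volume (slowDigits M) + (volume (Set.range ((↑) : ℚ → ℝ)) +
          volume (⋃ n, {x | x ∈ irrUnit ∧ M n < cfDig x n})) :=
        (measure_union_le _ _).trans (add_le_add_right (measure_union_le _ _) _)
    _ ≤ ENNReal.ofReal (1 / 2) := by rw [h0, hq, zero_add, zero_add]; exact hbad
  rw [← ENNReal.ofReal_one, ENNReal.ofReal_le_ofReal_iff (by norm_num)] at this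
  norm_num at this

/-! ### Inserting digits at sparse positions -/

open Classical in
/-- The sequence with value `d i` at the positions `i ∈ S`, the other positions being filled, in
order, by the terms of `a`. -/
noncomputable def insertDigits (S : Set ℕ) (d a : ℕ → ℕ) (i : ℕ) : ℕ :=
  if i ∈ S then d i else a (Nat.count (· ∉ S) i)

/-- The sum of the inserted positions below `N`. -/
noncomputable def posSum (S : Set ℕ) (N : ℕ) : ℕ := by
  classical exact ∑ i ∈ Finset.range N, if i ∈ S then i else 0

open Classical in
lemma posSum_succ (S : Set ℕ) (N : ℕ) :
    posSum S (N + 1) = posSum S N + if N ∈ S then N else 0 := by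
  simp [posSum, Finset.sum_range_succ]

lemma posSum_le_of_mem {S : Set ℕ} (hS : ∀ i ∈ S, ∀ j ∈ S, i < j → 2 * i ≤ j) (N : ℕ) :
    ∀ j ∈ S, N ≤ j → posSum S N ≤ j := by
  induction N with
  | zero => intro j _ _; simp [posSum]
  | succ N ih =>
    intro j hj hNj
    rw [posSum_succ]
    split_ifs with hN
    · have h1 := ih N hN le_rfl
      have h2 := hS N hN j hj (by omega)
      omega
    · have := ih j hj (by omega)
      omega

/-- If consecutive elements of `S` at least double, the sum of the elements below `N` is at most
`2 N`. -/
lemma posSum_le {S : Set ℕ} (hS : ∀ i ∈ S, ∀ j ∈ S, i < j → 2 * i ≤ j) (N : ℕ) :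
    posSum S N ≤ 2 * N := by
  induction N with
  | zero => simp [posSum]
  | succ N ih =>
    rw [posSum_succ]
    split_ifs with hN
    · have h1 := posSum_le_of_mem hS N N hN le_rfl
      omega
    · omega

open Classical in
lemma le_two_mul_count {S : Set ℕ} (hS : ∀ i ∈ S, ∀ j ∈ S, i < j → 2 * i ≤ j)
    (hS4 : ∀ i ∈ S, 4 ≤ i) (N : ℕ) : N ≤ 2 * Nat.count (· ∉ S) N := by
  have h : 4 * N ≤ 4 * Nat.count (· ∉ S) N + posSum S N := by
    induction N with
    | zero => simp
    | succ N ih =>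
      rw [posSum_succ, Nat.count_succ]
      by_cases hN : N ∈ S
      · have := hS4 N hN
        simp only [hN, not_true_eq_false, if_true, if_false]
        omega
      · simp only [hN, not_false_eq_true, if_true, if_false]
        omega
  have := posSum_le hS N
  omega

open Classical in
/-- Effect of the insertions on the denominators: each of them costs `2 (d i + 1) ≤ e^{κ i}`. -/
lemma cfDen_insertDigits {S : Set ℕ} {d a : ℕ → ℕ} {κ : ℝ} (hd : ∀ i ∈ S, 1 ≤ d i)
    (hdκ : ∀ i ∈ S, 2 * ((d i : ℝ) + 1) ≤ Real.exp (κ * i)) (ha : ∀ i, 1 ≤ a i) {t : ℝ}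
    (ht : t ∈ Set.Icc (0 : ℝ) 1) (N : ℕ) : ∀ m : List ℕ, PosList m →
    cfDen (pref (insertDigits S d a) N ++ m) t ≤
      Real.exp (κ * posSum S N) * cfDen (pref a (Nat.count (· ∉ S) N) ++ m) t := by
  induction N with
  | zero => intro m hm; simp [posSum, pref]
  | succ N ih =>
    intro m hm
    have hb : 1 ≤ insertDigits S d a N := by
      unfold insertDigits
      split_ifs with h
      · exact hd N h
      · exact ha _
    have h1 := ih (insertDigits S d a N :: m) (PosList.cons_iff.2 ⟨hb, hm⟩)
    rw [pref_succ, List.append_assoc, List.singleton_append]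
    refine h1.trans ?_
    rw [posSum_succ, Nat.count_succ]
    by_cases hN : N ∈ S
    · simp only [hN, not_true_eq_false, if_true, if_false, add_zero]
      have e : insertDigits S d a N = d N := by simp [insertDigits, hN]
      rw [e]
      have h2 := cfDen_delete (pref_pos ha (Nat.count (· ∉ S) N)) (hd N hN) hm ht
      have h3 := one_le_cfDen (PosList.append_iff.2
        ⟨pref_pos ha (Nat.count (· ∉ S) N), hm⟩) ht
      calc _ ≤ Real.exp (κ * posSum S N) * (2 * (d N + 1) *
              cfDen (pref a (Nat.count (· ∉ S) N) ++ m) t) := by gcongr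
        _ ≤ Real.exp (κ * posSum S N) * (Real.exp (κ * N) *
              cfDen (pref a (Nat.count (· ∉ S) N) ++ m) t) := by
            gcongr
            exact hdκ N hN
        _ = _ := by
            rw [← mul_assoc, ← Real.exp_add]
            push_cast
            ring_nf
    · simp only [hN, not_false_eq_true, if_true, if_false, add_zero]
      have e : insertDigits S d a N = a (Nat.count (· ∉ S) N) := by simp [insertDigits, hN]
      rw [e, pref_succ, List.append_assoc, List.singleton_append]

/-- Separation of two tails whose first digits differ. The next tails `α`, `β` cannot be close to
`1` and `0` respectively, so `1 + β - α` stays away from `0`. -/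
lemma tail_separation {A B : ℕ} {α β L : ℝ} (hA : 1 ≤ A) (hAB : A < B) (hBL : (B : ℝ) ≤ L)
    (hα : α ∈ Set.Ioo (0 : ℝ) 1) (hβ : β ∈ Set.Ioo (0 : ℝ) 1)
    (h : α ≤ 1 / 2 ∨ 1 / (L + 1) ≤ β) :
    1 / (2 * L) ^ 3 ≤ |1 / (A + α) - 1 / (B + β)| := by
  have hA' : (1 : ℝ) ≤ A := by exact_mod_cast hA
  have hAB' : (A : ℝ) + 1 ≤ B := by exact_mod_cast hAB
  have hpA : (0 : ℝ) < A + α := by linarith [hα.1]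
  have hpB : (0 : ℝ) < B + β := by linarith [hβ.1]
  have hL : 1 ≤ L := by linarith
  have hgap : 1 / (2 * L) ≤ (B + β) - (A + α) := by
    rcases h with h | h
    · have : 1 / (2 * L) ≤ 1 / 2 := one_div_le_one_div_of_le (by norm_num) (by linarith)
      linarith [hβ.1]
    · have : 1 / (2 * L) ≤ 1 / (L + 1) := one_div_le_one_div_of_le (by linarith) (by linarith)
      linarith [hα.2]
  have hprod : (A + α) * (B + β) ≤ (2 * L) * (2 * L) := by
    have h1 : A + α ≤ 2 * L := by linarith [hα.2]
    have h2 : B + β ≤ 2 * L := by linarith [hβ.2]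
    gcongr
  calc 1 / (2 * L) ^ 3 = 1 / (2 * L) / ((2 * L) * (2 * L)) := by field_simp
    _ ≤ ((B + β) - (A + α)) / ((A + α) * (B + β)) :=
        div_le_div₀ (hgap.trans' (by positivity)) hgap (by positivity) hprod
    _ = 1 / (A + α) - 1 / (B + β) := by field_simp
    _ ≤ _ := le_abs_self _

lemma cfDig_add_tail {x : ℝ} (hx : x ∈ irrUnit) (i : ℕ) {L : ℝ} (hL : (cfDig x i : ℝ) ≤ L) :
    1 / (L + 1) ≤ gaussMap^[i] x := by
  have h1 := (iterate_irrUnit hx (i + 1)).1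
  have h2 : (1 : ℝ) ≤ cfDig x i := by exact_mod_cast one_le_cfDig hx i
  rw [iterate_eq hx i]
  exact one_div_le_one_div_of_le (by linarith [h1.1]) (by linarith [h1.2])

lemma tail_le_half {x : ℝ} (hx : x ∈ irrUnit) (i : ℕ) (h : 2 ≤ cfDig x i) :
    gaussMap^[i] x ≤ 1 / 2 := by
  have h1 := (iterate_irrUnit hx (i + 1)).1
  have h2 : (2 : ℝ) ≤ cfDig x i := by exact_mod_cast h
  rw [iterate_eq hx i]
  exact one_div_le_one_div_of_le (by norm_num) (by linarith [h1.1])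

lemma eq_of_cfDig_eq {x y : ℝ} (hx : x ∈ irrUnit) (hy : y ∈ irrUnit)
    (h : ∀ i, cfDig x i = cfDig y i) : x = y := by
  by_contra hne
  have hpos : 0 < |x - y| := abs_pos.2 (sub_ne_zero.2 hne)
  obtain ⟨n, hn⟩ := pow_unbounded_of_one_lt (2 / |x - y|) (one_lt_two)
  have hxn := (iterate_irrUnit hx n).1
  have hyn := (iterate_irrUnit hy n).1
  have hp := pref_pos (one_le_cfDig hx) n
  have h1 := abs_cfBranch_sub hp (Set.Ioo_subset_Icc_self hxn) (Set.Ioo_subset_Icc_self hyn)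
  have h2 := two_pow_le_cfDen (Set.Ioo_subset_Icc_self hxn) (Set.Ioo_subset_Icc_self hyn) _ hp
  rw [← eq_cfBranch hx n, pref_congr (b := cfDig y) fun i _ => h i, ← eq_cfBranch hy n] at h1
  rw [pref_length, pref_congr (b := cfDig y) fun i _ => h i] at h2
  have h3 : |gaussMap^[n] x - gaussMap^[n] y| ≤ 1 := by
    rw [abs_le]; constructor <;> linarith [hxn.1, hxn.2, hyn.1, hyn.2]
  rw [div_lt_iff₀ hpos] at hn
  nlinarith

open Classical in
/-- The key estimate: `X` and `Y` arise from `x` and `y` by inserting digits, and `n` is the length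
of the common initial block of `x` and `y`. Here `R` is the product of the denominators of this
block at the tails of `x` and `y`. -/
lemma insert_separation_aux {S : Set ℕ} {d : ℕ → ℕ} {ε K : ℝ} (hε : 0 < ε)
    (hS : ∀ i ∈ S, ∀ j ∈ S, i < j → 2 * i ≤ j) (hS4 : ∀ i ∈ S, 4 ≤ i)
    (hd : ∀ i ∈ S, 2 ≤ d i) (hdε : ∀ i ∈ S, 2 * ((d i : ℝ) + 1) ≤ Real.exp (2 * ε * i))
    (hK : 1 ≤ K) {x y X Y : ℝ}
    (hx : x ∈ slowDigits fun n => K * Real.exp (ε * n))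
    (hy : y ∈ slowDigits fun n => K * Real.exp (ε * n))
    (hX : X ∈ irrUnit) (hY : Y ∈ irrUnit)
    (hXd : ∀ i, cfDig X i = insertDigits S d (cfDig x) i)
    (hYd : ∀ i, cfDig Y i = insertDigits S d (cfDig y) i)
    {n : ℕ} (hn : ∀ i < n, cfDig x i = cfDig y i) (hlt : cfDig x n < cfDig y n) :
    ∃ R : ℝ, 0 < R ∧ (2 : ℝ) ^ n ≤ 2 * R ∧ |x - y| * R ≤ 1 ∧
      1 ≤ 32 * K ^ 3 * Real.exp (3 * ε) * Real.exp (19 * ε * n) * R * |X - Y| := by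
  set p : ℕ → Prop := (· ∉ S) with hp
  have hinf : (Set.ofPred p).Infinite := by
    rw [← Nat.frequently_atTop_iff_infinite]
    by_contra hfin
    rw [Filter.not_frequently] at hfin
    obtain ⟨k, hk⟩ := Filter.eventually_atTop.1 hfin
    have h1 : k + 4 ∈ S := by simpa [hp] using hk (k + 4) (by omega)
    have h2 : k + 5 ∈ S := by simpa [hp] using hk (k + 5) (by omega)
    have := hS _ h1 _ h2 (by omega)
    omega
  -- `N` is the position of the digit number `n` after the insertions
  set N : ℕ := Nat.nth p n with hN
  have hcount : Nat.count p N = n := Nat.count_nth_of_infinite hinf n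
  have hNS : N ∉ S := Nat.nth_mem_of_infinite hinf n
  have hNn : N ≤ 2 * n := by
    have := le_two_mul_count hS hS4 N
    rwa [hcount] at this
  have hpre : ∀ i < N, cfDig X i = cfDig Y i := by
    intro i hi
    rw [hXd, hYd]
    unfold insertDigits
    split_ifs with h
    · rfl
    · exact hn _ (by rw [← hcount]; exact Nat.count_strict_mono (p := p) h hi)
  have hXN : cfDig X N = cfDig x n := by
    rw [hXd, insertDigits, if_neg hNS]; exact congrArg _ hcount
  have hYN : cfDig Y N = cfDig y n := by
    rw [hYd, insertDigits, if_neg hNS]; exact congrArg _ hcount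
  have hu := Set.Ioo_subset_Icc_self (iterate_irrUnit hx.1 n).1
  have hv := Set.Ioo_subset_Icc_self (iterate_irrUnit hy.1 n).1
  have hU := Set.Ioo_subset_Icc_self (iterate_irrUnit hX N).1
  have hV := Set.Ioo_subset_Icc_self (iterate_irrUnit hY N).1
  set u := gaussMap^[n] x
  set v := gaussMap^[n] y
  set U := gaussMap^[N] X with hUdef
  set V := gaussMap^[N] Y with hVdef
  set w := pref (cfDig x) n with hw
  set W := pref (cfDig X) N with hW
  have hwp : PosList w := pref_pos (one_le_cfDig hx.1) n
  have hWp : PosList W := pref_pos (one_le_cfDig hX) N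
  have e1 := abs_cfBranch_sub hwp hu hv
  have e2 := abs_cfBranch_sub hWp hU hV
  have hwy : w = pref (cfDig y) n := pref_congr hn
  have hWY : W = pref (cfDig Y) N := pref_congr hpre
  have ex : cfBranch w u = x := (eq_cfBranch hx.1 n).symm
  have ey : cfBranch w v = y := by rw [hwy]; exact (eq_cfBranch hy.1 n).symm
  have eX : cfBranch W U = X := (eq_cfBranch hX N).symm
  have eY : cfBranch W V = Y := by rw [hWY]; exact (eq_cfBranch hY N).symm
  rw [ex, ey] at e1
  rw [eX, eY] at e2
  have hden : ∀ t ∈ Set.Icc (0 : ℝ) 1, cfDen W t ≤ Real.exp (8 * ε * n) * cfDen w t := by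
    intro t ht
    have h1 := cfDen_insertDigits (κ := 2 * ε) (fun i hi => (by norm_num : 1 ≤ 2).trans (hd i hi))
      hdε (one_le_cfDig hx.1) ht N [] (by simp [PosList])
    have e : pref (insertDigits S d (cfDig x)) N = W := pref_congr fun i _ => (hXd i).symm
    have hc : Nat.count (· ∉ S) N = n := hcount
    rw [List.append_nil, List.append_nil, hc, e] at h1
    refine h1.trans ?_
    have := one_le_cfDen hwp ht
    have h2 : posSum S N ≤ 4 * n := (posSum_le hS N).trans (by omega)
    have h3 : (posSum S N : ℝ) ≤ 4 * n := by exact_mod_cast h2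
    have h4 : 2 * ε * posSum S N ≤ 8 * ε * n := by nlinarith
    exact mul_le_mul_of_nonneg_right (Real.exp_le_exp.2 h4) (by linarith)
  have du := one_le_cfDen hwp hu
  have dv := one_le_cfDen hwp hv
  have dU := one_le_cfDen hwp hU
  have dV := one_le_cfDen hwp hV
  have DU := one_le_cfDen hWp hU
  have DV := one_le_cfDen hWp hV
  have hDD : cfDen W U * cfDen W V ≤ 4 * Real.exp (16 * ε * n) * (cfDen w u * cfDen w v) := by
    calc _ ≤ (Real.exp (8 * ε * n) * cfDen w U) * (Real.exp (8 * ε * n) * cfDen w V) := by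
          gcongr
          · exact hden U hU
          · exact hden V hV
      _ ≤ (Real.exp (8 * ε * n) * (2 * cfDen w u)) * (Real.exp (8 * ε * n) * (2 * cfDen w v)) := by
          have := cfDen_le_two_mul hwp hU hu
          have := cfDen_le_two_mul hwp hV hv
          gcongr
      _ = 4 * (Real.exp (8 * ε * n) * Real.exp (8 * ε * n)) * (cfDen w u * cfDen w v) := by ring
      _ = _ := by rw [← Real.exp_add]; ring_nf
  have hsep : 1 / (2 * (K * Real.exp (ε * (n + 1)))) ^ 3 ≤ |U - V| := by
    rw [hUdef, hVdef, iterate_eq hX N, iterate_eq hY N, hXN, hYN]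
    apply tail_separation (one_le_cfDig hx.1 n) hlt ?_ (iterate_irrUnit hX (N + 1)).1
      (iterate_irrUnit hY (N + 1)).1
    · by_cases hS' : N + 1 ∈ S
      · left
        apply tail_le_half hX
        rw [hXd, insertDigits, if_pos hS']
        exact hd _ hS'
      · right
        apply cfDig_add_tail hY
        have hc : Nat.count (· ∉ S) (N + 1) = n + 1 := by
          rw [Nat.count_succ, if_pos hNS]; exact congrArg (· + 1) hcount
        rw [hYd, insertDigits, if_neg hS', hc]
        have := hy.2 (n + 1)
        push_cast at this
        exact this
    · refine (hy.2 n).trans ?_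
      have : ε * n ≤ ε * (n + 1) := by nlinarith
      exact mul_le_mul_of_nonneg_left (Real.exp_le_exp.2 this) (by linarith)
  refine ⟨cfDen w u * cfDen w v, by positivity, ?_, ?_, ?_⟩
  · have := two_pow_le_cfDen hu hv w hwp
    rwa [hw, pref_length] at this
  · rw [e1, abs_le]
    constructor <;> linarith [hu.1, hu.2, hv.1, hv.2]
  · have hexp : (2 * (K * Real.exp (ε * (n + 1)))) ^ 3
        = 8 * K ^ 3 * Real.exp (3 * ε) * Real.exp (3 * ε * n) := by
      rw [mul_pow, mul_pow, ← Real.exp_nat_mul, mul_assoc (8 * K ^ 3), ← Real.exp_add]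
      push_cast
      ring_nf
    rw [hexp, ← e2, div_le_iff₀ (by positivity)] at hsep
    calc (1 : ℝ) ≤ _ := hsep
      _ ≤ |X - Y| * (4 * Real.exp (16 * ε * n) * (cfDen w u * cfDen w v)) *
          (8 * K ^ 3 * Real.exp (3 * ε) * Real.exp (3 * ε * n)) := by gcongr
      _ = 32 * K ^ 3 * Real.exp (3 * ε) * (Real.exp (16 * ε * n) * Real.exp (3 * ε * n)) *
          (cfDen w u * cfDen w v) * |X - Y| := by ring
      _ = _ := by rw [← Real.exp_add]; ring_nf

/-- Deleting the inserted digits is Hölder of exponent `1 / (1 + η)`, provided the rate `ε` of the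
insertions is small compared with `η`. -/
lemma insert_separation {S : Set ℕ} {d : ℕ → ℕ} {ε K η : ℝ} (hε : 0 < ε) (hη : 0 < η)
    (hεη : 19 * ε ≤ η * Real.log 2)
    (hS : ∀ i ∈ S, ∀ j ∈ S, i < j → 2 * i ≤ j) (hS4 : ∀ i ∈ S, 4 ≤ i)
    (hd : ∀ i ∈ S, 2 ≤ d i) (hdε : ∀ i ∈ S, 2 * ((d i : ℝ) + 1) ≤ Real.exp (2 * ε * i))
    (hK : 1 ≤ K) {x y X Y : ℝ}
    (hx : x ∈ slowDigits fun n => K * Real.exp (ε * n))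
    (hy : y ∈ slowDigits fun n => K * Real.exp (ε * n))
    (hX : X ∈ irrUnit) (hY : Y ∈ irrUnit)
    (hXd : ∀ i, cfDig X i = insertDigits S d (cfDig x) i)
    (hYd : ∀ i, cfDig Y i = insertDigits S d (cfDig y) i) :
    |x - y| ^ (1 + η) ≤ (32 * K ^ 3 * Real.exp (3 * ε) * 2 ^ η) * |X - Y| := by
  rcases eq_or_ne x y with rfl | hne
  · rw [sub_self, abs_zero, Real.zero_rpow (by linarith)]
    positivity
  classical
  have hex : ∃ n, cfDig x n ≠ cfDig y n := by
    by_contra hcon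
    push Not at hcon
    exact hne (eq_of_cfDig_eq hx.1 hy.1 hcon)
  set n := Nat.find hex with hn
  have hpre : ∀ i < n, cfDig x i = cfDig y i := fun i hi => by
    simpa using Nat.find_min hex hi
  have hR : ∃ R : ℝ, 0 < R ∧ (2 : ℝ) ^ n ≤ 2 * R ∧ |x - y| * R ≤ 1 ∧
      1 ≤ 32 * K ^ 3 * Real.exp (3 * ε) * Real.exp (19 * ε * n) * R * |X - Y| := by
    rcases lt_or_gt_of_ne (Nat.find_spec hex) with h | h
    · exact insert_separation_aux hε hS hS4 hd hdε hK hx hy hX hY hXd hYd hpre h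
    · rw [abs_sub_comm x, abs_sub_comm X]
      exact insert_separation_aux hε hS hS4 hd hdε hK hy hx hY hX hYd hXd
        (fun i hi => (hpre i hi).symm) h
  obtain ⟨R, hR0, hRn, hxy, hXY⟩ := hR
  have h1 : Real.exp (19 * ε * n) ≤ 2 ^ η * R ^ η := by
    rw [← Real.mul_rpow (by norm_num) hR0.le]
    calc Real.exp (19 * ε * n) ≤ Real.exp (η * Real.log 2 * n) := by gcongr
      _ = ((2 : ℝ) ^ n) ^ η := by
          rw [← Real.rpow_natCast, ← Real.rpow_mul (by norm_num), Real.rpow_def_of_pos (by norm_num)]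
          ring_nf
      _ ≤ _ := by gcongr
  have h2 : |x - y| ≤ R⁻¹ := by
    rw [← one_div, le_div_iff₀ hR0]; exact hxy
  calc |x - y| ^ (1 + η) ≤ (R⁻¹) ^ (1 + η) := by gcongr
    _ = (R ^ (1 + η))⁻¹ := Real.inv_rpow hR0.le _
    _ ≤ _ := by
      rw [inv_le_iff_one_le_mul₀ (by positivity), Real.rpow_add hR0, Real.rpow_one]
      calc (1 : ℝ) ≤ _ := hXY
        _ ≤ 32 * K ^ 3 * Real.exp (3 * ε) * (2 ^ η * R ^ η) * R * |X - Y| := by gcongr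
        _ = _ := by ring

/-! ### Choice of the inserted positions and conclusion -/

/-- An infinite set of naturals contains an infinite subset, beyond any bound, along which
consecutive elements at least double. -/
lemma exists_sparse_subset {A : Set ℕ} (hA : A.Infinite) (i₀ : ℕ) :
    ∃ S ⊆ A, S.Infinite ∧ (∀ i ∈ S, i₀ ≤ i) ∧ ∀ i ∈ S, ∀ j ∈ S, i < j → 2 * i ≤ j := by
  have hstep : ∀ m : ℕ, ∃ k ∈ A, max (2 * m) i₀ < k := fun m => hA.exists_gt _
  choose f hfA hf using hstep
  set s : ℕ → ℕ := fun k => f^[k + 1] 0 with hs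
  have hsucc : ∀ k, s (k + 1) = f (s k) := fun k => Function.iterate_succ_apply' f (k + 1) 0
  have hform : ∀ k, ∃ m, s k = f m := fun k => ⟨f^[k] 0, Function.iterate_succ_apply' f k 0⟩
  have hgap : ∀ k, 2 * s k < s (k + 1) := fun k => by
    rw [hsucc]; exact (le_max_left _ _).trans_lt (hf _)
  have hmono : StrictMono s := strictMono_nat_of_lt_succ fun k => by have := hgap k; omega
  refine ⟨Set.range s, ?_, Set.infinite_range_of_injective hmono.injective, ?_, ?_⟩
  · rintro _ ⟨k, rfl⟩
    obtain ⟨m, hm⟩ := hform k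
    rw [hm]; exact hfA m
  · rintro _ ⟨k, rfl⟩
    obtain ⟨m, hm⟩ := hform k
    rw [hm]; exact (le_max_right _ _).trans (hf m).le
  · rintro _ ⟨k, rfl⟩ _ ⟨l, rfl⟩ hkl
    have h1 : s (k + 1) ≤ s l := hmono.monotone (hmono.lt_iff_lt.1 hkl)
    have := hgap k
    omega

/-- The digits to be inserted: infinitely many sparse positions `i`, with a digit which is at least
`Φ (i + 1)` but grows only at rate `2 ε`. -/
lemma exists_positions {Φ : ℕ → ℝ} (hΦ : ∀ n, 0 < Φ n)
    (h : liminf (fun n : ℕ => ((Real.log (Φ n) / n : ℝ) : EReal)) atTop = 0)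
    {ε : ℝ} (hε : 0 < ε) :
    ∃ (S : Set ℕ) (d : ℕ → ℕ), S.Infinite ∧ (∀ i ∈ S, 4 ≤ i) ∧
      (∀ i ∈ S, ∀ j ∈ S, i < j → 2 * i ≤ j) ∧ (∀ i, 2 ≤ d i) ∧ (∀ i, Φ (i + 1) ≤ d i) ∧
      ∀ i ∈ S, 2 * ((d i : ℝ) + 1) ≤ Real.exp (2 * ε * i) := by
  have hfreq : ∃ᶠ n : ℕ in atTop, ((Real.log (Φ n) / n : ℝ) : EReal) < ε := by
    apply frequently_lt_of_liminf_lt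
    · isBoundedDefault
    · rw [h]; exact_mod_cast hε
  have hA : {i : ℕ | Φ (i + 1) ≤ Real.exp (ε * (i + 1))}.Infinite := by
    rw [← Nat.frequently_atTop_iff_infinite, Filter.frequently_atTop]
    intro k
    obtain ⟨n, hn, hlt⟩ := Filter.frequently_atTop.1 hfreq (k + 1)
    obtain ⟨i, rfl⟩ : ∃ i, n = i + 1 := ⟨n - 1, by omega⟩
    refine ⟨i, by omega, ?_⟩
    have hlt' : Real.log (Φ (i + 1)) / ((i + 1 : ℕ) : ℝ) < ε := by exact_mod_cast hlt
    rw [div_lt_iff₀ (by positivity)] at hlt'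
    push_cast at hlt'
    exact ((Real.log_lt_iff_lt_exp (hΦ _)).1 hlt').le
  have hz : ∀ᶠ i : ℕ in atTop, 2 * Real.exp ε + 8 ≤ Real.exp (ε * i) :=
    (Real.tendsto_exp_atTop.comp
      (tendsto_natCast_atTop_atTop.const_mul_atTop hε)).eventually_ge_atTop _
  obtain ⟨i₀, hi₀⟩ := Filter.eventually_atTop.1 hz
  obtain ⟨S, hSA, hSinf, hSge, hSgap⟩ := exists_sparse_subset hA (max 4 i₀)
  refine ⟨S, fun i => max 2 ⌈Φ (i + 1)⌉₊, hSinf, fun i hi => (le_max_left _ _).trans (hSge i hi),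
    hSgap, fun i => le_max_left _ _, fun i => ?_, fun i hi => ?_⟩
  · exact (Nat.le_ceil _).trans (by exact_mod_cast le_max_right _ _)
  · have h1 : Φ (i + 1) ≤ Real.exp (ε * (i + 1)) := hSA hi
    have h2 : (⌈Φ (i + 1)⌉₊ : ℝ) < Φ (i + 1) + 1 := Nat.ceil_lt_add_one (hΦ _).le
    have h3 := hi₀ i ((le_max_right _ _).trans (hSge i hi))
    have h4 : ((max 2 ⌈Φ (i + 1)⌉₊ : ℕ) : ℝ) ≤ Real.exp (ε * (i + 1)) + 2 := by
      push_cast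
      exact max_le (by linarith [Real.exp_pos (ε * (i + 1))]) (by linarith)
    have e1 : Real.exp (ε * (i + 1)) = Real.exp ε * Real.exp (ε * i) := by
      rw [← Real.exp_add]; ring_nf
    have e2 : Real.exp (2 * ε * i) = Real.exp (ε * i) * Real.exp (ε * i) := by
      rw [← Real.exp_add]; ring_nf
    rw [e2]
    rw [e1] at h4
    nlinarith [Real.exp_pos ε, Real.exp_pos (ε * i)]

/-- If the inverse of `G : F → E` is Hölder of exponent `1 / (1 + η)` and `F` has positive length,
then `dimH E ≥ 1 / (1 + η)`. -/
lemma one_le_mul_dimH {F E : Set ℝ} {G : ℝ → ℝ} {η C : ℝ} (hη : 0 < η) (hC : 0 ≤ C)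
    (hF : volume F ≠ 0) (hG : ∀ x ∈ F, G x ∈ E)
    (hGH : ∀ x ∈ F, ∀ y ∈ F, |x - y| ^ (1 + η) ≤ C * |G x - G y|) :
    1 ≤ dimH E * ENNReal.ofReal (1 + η) := by
  have hF1 : (1 : ℝ≥0∞) ≤ dimH F := by
    have : μH[((1 : ℝ≥0) : ℝ)] F ≠ 0 := by
      rw [NNReal.coe_one, hausdorffMeasure_real]; exact hF
    simpa using le_dimH_of_hausdorffMeasure_ne_zero this
  have hη1 : 0 < 1 + η := by linarith
  set r : ℝ≥0 := (1 + η)⁻¹.toNNReal with hr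
  have hr0 : 0 < r := Real.toNNReal_pos.2 (inv_pos.2 hη1)
  have hrc : (r : ℝ) = (1 + η)⁻¹ := Real.coe_toNNReal _ (inv_pos.2 hη1).le
  have hH : ∀ x ∈ F, ∀ y ∈ F, |x - y| ≤ C ^ (1 + η)⁻¹ * |G x - G y| ^ (1 + η)⁻¹ := by
    intro x hx y hy
    rw [← Real.mul_rpow hC (abs_nonneg _)]
    rw [Real.le_rpow_inv_iff_of_pos (abs_nonneg _) (by positivity) hη1]
    exact hGH x hx y hy
  have hinj : Set.InjOn G F := by
    intro x hx y hy hxy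
    have := hH x hx y hy
    rw [hxy, sub_self, abs_zero, Real.zero_rpow (by positivity), mul_zero] at this
    exact sub_eq_zero.1 (abs_eq_zero.1 (le_antisymm this (abs_nonneg _)))
  set g := Function.invFunOn G F
  have hg : ∀ x ∈ F, g (G x) = x := fun x hx => hinj.leftInvOn_invFunOn hx
  have hgH : HolderOnWith (C ^ (1 + η)⁻¹).toNNReal r g (G '' F) := by
    rintro _ ⟨x, hx, rfl⟩ _ ⟨y, hy, rfl⟩
    rw [hg x hx, hg y hy, edist_dist, edist_dist, Real.dist_eq, Real.dist_eq,
      hrc, ENNReal.ofReal_rpow_of_nonneg (abs_nonneg _) (by positivity)]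
    change _ ≤ ENNReal.ofReal (C ^ (1 + η)⁻¹) * _
    rw [← ENNReal.ofReal_mul (by positivity)]
    exact ENNReal.ofReal_le_ofReal (hH x hx y hy)
  have himg : F ⊆ g '' (G '' F) := fun x hx => ⟨G x, ⟨x, hx, rfl⟩, hg x hx⟩
  have hsub : G '' F ⊆ E := by rintro _ ⟨x, hx, rfl⟩; exact hG x hx
  have hrinv : (r : ℝ≥0∞)⁻¹ = ENNReal.ofReal (1 + η) := by
    have : (r : ℝ≥0∞) = (ENNReal.ofReal (1 + η))⁻¹ := by
      rw [← ENNReal.ofReal_inv_of_pos hη1]; rfl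
    rw [this, inv_inv]
  calc (1 : ℝ≥0∞) ≤ dimH F := hF1
    _ ≤ dimH (g '' (G '' F)) := dimH_mono himg
    _ ≤ dimH (G '' F) / r := hgH.dimH_image_le hr0
    _ ≤ dimH E / r := by gcongr
    _ = _ := by rw [div_eq_mul_inv, hrinv]

lemma one_le_dimH_E1_mul {Φ : ℕ → ℝ} (hΦ : ∀ n, 0 < Φ n)
    (h : liminf (fun n : ℕ => ((Real.log (Φ n) / n : ℝ) : EReal)) atTop = 0)
    {η : ℝ} (hη : 0 < η) : 1 ≤ dimH (E1 Φ) * ENNReal.ofReal (1 + η) := by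
  set ε : ℝ := η * Real.log 2 / 19 with hεdef
  have hε : 0 < ε := by have := Real.log_pos one_lt_two; positivity
  obtain ⟨K, hK, hvol⟩ := exists_slowDigits hε
  obtain ⟨S, d, hSinf, hS4, hS, hd, hdΦ, hdε⟩ := exists_positions hΦ h hε
  have hex : ∀ x : ℝ, ∃ X : ℝ, x ∈ irrUnit →
      X ∈ irrUnit ∧ ∀ i, cfDig X i = insertDigits S d (cfDig x) i := by
    intro x
    by_cases hx : x ∈ irrUnit
    · obtain ⟨X, hX, hXd⟩ := exists_cfDig (b := insertDigits S d (cfDig x)) fun i => by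
        unfold insertDigits
        split_ifs
        · exact (by norm_num : 1 ≤ 2).trans (hd i)
        · exact one_le_cfDig hx _
      exact ⟨X, fun _ => ⟨hX, hXd⟩⟩
    · exact ⟨0, fun hx' => absurd hx' hx⟩
  choose G hG using hex
  refine one_le_mul_dimH (G := G) (C := 32 * K ^ 3 * Real.exp (3 * ε) * 2 ^ η) hη (by positivity)
    hvol ?_ ?_
  · intro x hx
    obtain ⟨hX, hXd⟩ := hG x hx.1
    refine ⟨⟨hX.1.1.le, hX.1.2⟩, hX.2, ?_⟩
    rw [Filter.frequently_atTop]
    intro k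
    obtain ⟨i, hi, hik⟩ := hSinf.exists_gt k
    refine ⟨i + 1, by omega, ?_⟩
    have e : cfA (i + 1) (G x) = d i := by
      have := hXd i
      rw [insertDigits, if_pos hi] at this
      exact this
    rw [e]
    exact hdΦ i
  · intro x hx y hy
    exact insert_separation hε hη (by rw [hεdef]; linarith) hS hS4 (fun i _ => hd i) hdε hK hx hy
      (hG x hx.1).1 (hG y hy.1).1 (hG x hx.1).2 (hG y hy.1).2

theorem dimH_E1_of_B_eq_one (Φ : ℕ → ℝ) (hΦ : ∀ n, 0 < Φ n)
    (h : liminf (fun n : ℕ => ((Real.log (Φ n) / n : ℝ) : EReal)) atTop = 0) :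
    dimH (E1 Φ) = 1 := by
  have hle : dimH (E1 Φ) ≤ 1 := (dimH_mono (Set.subset_univ _)).trans Real.dimH_univ.le
  refine le_antisymm hle ?_
  have hlim : Tendsto (fun η : ℝ => dimH (E1 Φ) * ENNReal.ofReal (1 + η)) (𝓝[>] 0)
      (𝓝 (dimH (E1 Φ) * ENNReal.ofReal (1 + 0))) := by
    apply ENNReal.Tendsto.const_mul
    · apply ENNReal.tendsto_ofReal
      exact ((continuous_const.add continuous_id).tendsto 0).mono_left nhdsWithin_le_nhds
    · exact Or.inr (ne_top_of_le_ne_top ENNReal.one_ne_top hle)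
  rw [add_zero, ENNReal.ofReal_one, mul_one] at hlim
  refine ge_of_tendsto hlim ?_
  filter_upwards [self_mem_nhdsWithin] with η hη
  exact one_le_dimH_E1_mul hΦ h hη
end
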